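/- arXiv:1808.00587 — 3 statements merged into one kernel-verified Lean document; each statement's English description precedes it below -/
import Mathlib

section
/- Let ε̄ ∈ int(E) and let (X*, y*, S*) be a maximally complementary solution at ε̄. Then the Jacobian J(X*, y*, S*) is nonsingular if and only if (X*, y*, S*) is strictly complementary, X* is primal nondegenerate, and (y*, S*) is dual nondegenerate. -/
open Matrix Set

noncomputable section

variable {n m : ℕ}

/-- Feasibility for the primal SDO problem `(P_ε)` (the feasible set does not depend on `ε`). -/
def PrimalFeasible (A : Fin m → Matrix (Fin n) (Fin n) ℝ) (b : Fin m → ℝ)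
    (X : Matrix (Fin n) (Fin n) ℝ) : Prop :=
  X.IsSymm ∧ (∀ i, ((A i) * X).trace = b i) ∧ X.PosSemidef

/-- Feasibility for the dual SDO problem `(D_ε)`. -/
def DualFeasible (C Cbar : Matrix (Fin n) (Fin n) ℝ)
    (A : Fin m → Matrix (Fin n) (Fin n) ℝ) (ε : ℝ)
    (y : Fin m → ℝ) (S : Matrix (Fin n) (Fin n) ℝ) : Prop :=
  S.IsSymm ∧ (∑ i, y i • A i) + S = C + ε • Cbar ∧ S.PosSemidef

/-- The optimal value function `v(ε)` of `(P_ε)`, with values in `EReal`. -/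
def vfun (C Cbar : Matrix (Fin n) (Fin n) ℝ) (A : Fin m → Matrix (Fin n) (Fin n) ℝ)
    (b : Fin m → ℝ) (ε : ℝ) : EReal :=
  sInf ((fun X => (((C + ε • Cbar) * X).trace : EReal)) '' {X | PrimalFeasible A b X})

/-- `E = {ε : v(ε) > -∞}`. -/
def Eset (C Cbar : Matrix (Fin n) (Fin n) ℝ) (A : Fin m → Matrix (Fin n) (Fin n) ℝ)
    (b : Fin m → ℝ) : Set ℝ :=
  {ε | ⊥ < vfun C Cbar A b ε}

/-- The primal optimal set `P*(ε)`. -/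
def PrimalOpt (C Cbar : Matrix (Fin n) (Fin n) ℝ) (A : Fin m → Matrix (Fin n) (Fin n) ℝ)
    (b : Fin m → ℝ) (ε : ℝ) : Set (Matrix (Fin n) (Fin n) ℝ) :=
  {X | PrimalFeasible A b X ∧ ∀ X', PrimalFeasible A b X' →
    ((C + ε • Cbar) * X).trace ≤ ((C + ε • Cbar) * X').trace}

/-- The dual optimal set `D*(ε)`. -/
def DualOpt (C Cbar : Matrix (Fin n) (Fin n) ℝ) (A : Fin m → Matrix (Fin n) (Fin n) ℝ)
    (b : Fin m → ℝ) (ε : ℝ) : Set ((Fin m → ℝ) × Matrix (Fin n) (Fin n) ℝ) :=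
  {p | DualFeasible C Cbar A ε p.1 p.2 ∧ ∀ y' S', DualFeasible C Cbar A ε y' S' →
    ∑ i, b i * y' i ≤ ∑ i, b i * p.1 i}

/-- A maximally complementary optimal solution: `X` lies in the relative interior of `P*(ε)`
and `(y, S)` in the relative interior of `D*(ε)`. -/
def MaxComp (C Cbar : Matrix (Fin n) (Fin n) ℝ) (A : Fin m → Matrix (Fin n) (Fin n) ℝ)
    (b : Fin m → ℝ) (ε : ℝ) (X : Matrix (Fin n) (Fin n) ℝ) (y : Fin m → ℝ)
    (S : Matrix (Fin n) (Fin n) ℝ) : Prop :=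
  X ∈ intrinsicInterior ℝ (PrimalOpt C Cbar A b ε) ∧
    (y, S) ∈ intrinsicInterior ℝ (DualOpt C Cbar A b ε)

/-- `π(ε) = π(ε')`: the optimal partitions at `ε` and `ε'` coincide, expressed through
maximally complementary solutions (`B = range X*`, `N = range S*`, `T` being determined
by `B` and `N`). -/
def SamePartition (C Cbar : Matrix (Fin n) (Fin n) ℝ) (A : Fin m → Matrix (Fin n) (Fin n) ℝ)
    (b : Fin m → ℝ) (ε ε' : ℝ) : Prop :=
  ∃ X y S X' y' S', MaxComp C Cbar A b ε X y S ∧ MaxComp C Cbar A b ε' X' y' S' ∧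
    LinearMap.range X.mulVecLin = LinearMap.range X'.mulVecLin ∧
    LinearMap.range S.mulVecLin = LinearMap.range S'.mulVecLin

/-- The standing assumptions: symmetric data, linearly independent constraint matrices and
the interior point condition at `ε = 0`. -/
def StandingAssumptions (C Cbar : Matrix (Fin n) (Fin n) ℝ)
    (A : Fin m → Matrix (Fin n) (Fin n) ℝ) (b : Fin m → ℝ) : Prop :=
  C.IsSymm ∧ Cbar.IsSymm ∧ (∀ i, (A i).IsSymm) ∧ LinearIndependent ℝ A ∧
    ∃ X y S, PrimalFeasible A b X ∧ X.PosDef ∧ DualFeasible C Cbar A 0 y S ∧ S.PosDef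

/-- The invariancy set of `ε̄`. -/
def InvSet (C Cbar : Matrix (Fin n) (Fin n) ℝ) (A : Fin m → Matrix (Fin n) (Fin n) ℝ)
    (b : Fin m → ℝ) (εbar : ℝ) : Set ℝ :=
  {ε | ε ∈ interior (Eset C Cbar A b) ∧ SamePartition C Cbar A b ε εbar}

/-- `dim B(ε) = dim B(ε')` and `dim N(ε) = dim N(ε')`, expressed through maximally
complementary solutions. -/
def DimsMatch (C Cbar : Matrix (Fin n) (Fin n) ℝ) (A : Fin m → Matrix (Fin n) (Fin n) ℝ)
    (b : Fin m → ℝ) (ε ε' : ℝ) : Prop :=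
  ∀ X y S X' y' S', MaxComp C Cbar A b ε X y S → MaxComp C Cbar A b ε' X' y' S' →
    Module.finrank ℝ (LinearMap.range X.mulVecLin) =
        Module.finrank ℝ (LinearMap.range X'.mulVecLin) ∧
      Module.finrank ℝ (LinearMap.range S.mulVecLin) =
        Module.finrank ℝ (LinearMap.range S'.mulVecLin)

/-- A transition point: a singleton invariancy set such that every neighborhood contains a
parameter at which `dim B` or `dim N` differs. -/
def IsTransitionPoint (C Cbar : Matrix (Fin n) (Fin n) ℝ) (A : Fin m → Matrix (Fin n) (Fin n) ℝ)
    (b : Fin m → ℝ) (εbar : ℝ) : Prop :=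
  εbar ∈ interior (Eset C Cbar A b) ∧
    (∀ ε ∈ interior (Eset C Cbar A b), ε ≠ εbar → ¬ SamePartition C Cbar A b ε εbar) ∧
    ∀ ξ : ℝ, 0 < ξ → ∃ ε ∈ Set.Ioo (εbar - ξ) (εbar + ξ) ∩ interior (Eset C Cbar A b),
      ¬ DimsMatch C Cbar A b ε εbar

/-- Existence of a strictly complementary optimal solution at `ε`. -/
def HasStrictComp (C Cbar : Matrix (Fin n) (Fin n) ℝ) (A : Fin m → Matrix (Fin n) (Fin n) ℝ)
    (b : Fin m → ℝ) (ε : ℝ) : Prop :=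
  ∃ X y S, X ∈ PrimalOpt C Cbar A b ε ∧ (y, S) ∈ DualOpt C Cbar A b ε ∧ (X + S).PosDef

/-- Nonsingularity of the Jacobian `J(X, y, S)` of the optimality system, as a linear map on
`S^n × ℝ^m × S^n`: only the trivial symmetric triple is mapped to zero. -/
def JNonsingular (A : Fin m → Matrix (Fin n) (Fin n) ℝ)
    (X S : Matrix (Fin n) (Fin n) ℝ) : Prop :=
  ∀ (DX DS : Matrix (Fin n) (Fin n) ℝ) (Dy : Fin m → ℝ), DX.IsSymm → DS.IsSymm →
    (∀ i, ((A i) * DX).trace = 0) → ((∑ i, Dy i • A i) + DS = 0) →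
    (DX * S + S * DX + X * DS + DS * X = 0) → DX = 0 ∧ Dy = 0 ∧ DS = 0

/-- Primal nondegeneracy of a primal feasible `X`. -/
def PrimalNondeg (A : Fin m → Matrix (Fin n) (Fin n) ℝ)
    (X : Matrix (Fin n) (Fin n) ℝ) : Prop :=
  ∃ (r : ℕ) (M₁ : Matrix (Fin n) (Fin r) ℝ) (M₂ : Matrix (Fin n) (Fin (n - r)) ℝ),
    M₁ᵀ * M₁ = 1 ∧ M₂ᵀ * M₂ = 1 ∧ M₁ᵀ * M₂ = 0 ∧
    LinearMap.range M₁.mulVecLin = LinearMap.range X.mulVecLin ∧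
    LinearIndependent ℝ (fun i =>
      Matrix.fromBlocks (M₁ᵀ * (A i) * M₁) (M₁ᵀ * (A i) * M₂) (M₂ᵀ * (A i) * M₁) 0)

/-- Dual nondegeneracy of a dual feasible `(y, S)` (the condition involves only `S`). -/
def DualNondeg (A : Fin m → Matrix (Fin n) (Fin n) ℝ)
    (S : Matrix (Fin n) (Fin n) ℝ) : Prop :=
  ∃ (k : ℕ) (N₁ : Matrix (Fin n) (Fin k) ℝ),
    N₁ᵀ * N₁ = 1 ∧ LinearMap.range N₁.mulVecLin = LinearMap.ker S.mulVecLin ∧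
    ∀ W : Matrix (Fin k) (Fin k) ℝ, W.IsSymm →
      W ∈ Submodule.span ℝ (Set.range fun i => N₁ᵀ * (A i) * N₁)

/-- A central solution with parameter `μ` for the problems `(P_ε)` and `(D_ε)`. -/
def CentralSol (C Cbar : Matrix (Fin n) (Fin n) ℝ) (A : Fin m → Matrix (Fin n) (Fin n) ℝ)
    (b : Fin m → ℝ) (ε μ : ℝ) (X : Matrix (Fin n) (Fin n) ℝ) (y : Fin m → ℝ)
    (S : Matrix (Fin n) (Fin n) ℝ) : Prop :=
  PrimalFeasible A b X ∧ DualFeasible C Cbar A ε y S ∧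
    X * S = μ • (1 : Matrix (Fin n) (Fin n) ℝ)

/-- The Frobenius norm of a matrix. -/
def frobNorm {α β : Type*} [Fintype α] [Fintype β] (M : Matrix α β ℝ) : ℝ :=
  Real.sqrt (∑ i, ∑ j, (M i j) ^ 2)

/-- The spectral norm (induced 2-norm) of a square matrix. -/
def specNorm {N : ℕ} (M : Matrix (Fin N) (Fin N) ℝ) : ℝ :=
  ‖LinearMap.toContinuousLinearMap (Matrix.toEuclideanLin M)‖

/-- The smallest eigenvalue of a symmetric matrix, via the Rayleigh quotient. -/
def lamMin {k : ℕ} (M : Matrix (Fin k) (Fin k) ℝ) : ℝ :=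
  sInf {r : ℝ | ∃ x : Fin k → ℝ, (∑ i, (x i) ^ 2) = 1 ∧ r = x ⬝ᵥ M.mulVec x}

/-- `θ^μ`: the operator norm of the inverse of the Jacobian `J(X, y, S)` on
`S^n × ℝ^m × S^n`, characterized as the least constant `t ≥ 0` with
`‖(ΔX, Δy, ΔS)‖ ≤ t * ‖J(X,y,S)(ΔX, Δy, ΔS)‖` for all symmetric `ΔX`, `ΔS`. -/
def thetaMu (A : Fin m → Matrix (Fin n) (Fin n) ℝ)
    (X S : Matrix (Fin n) (Fin n) ℝ) : ℝ :=
  sInf {t : ℝ | 0 ≤ t ∧ ∀ (DX DS : Matrix (Fin n) (Fin n) ℝ) (Dy : Fin m → ℝ),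
    DX.IsSymm → DS.IsSymm →
    Real.sqrt (frobNorm DX ^ 2 + (∑ i, (Dy i) ^ 2) + frobNorm DS ^ 2) ≤
      t * Real.sqrt ((∑ i, (((A i) * DX).trace) ^ 2) +
        frobNorm ((∑ i, Dy i • A i) + DS) ^ 2 +
        frobNorm ((1 / 2 : ℝ) • (DX * S + S * DX + X * DS + DS * X)) ^ 2)}

/-- A nonlinearity interval: a non-singleton open subinterval of `int(E)`, of maximal length,
on which `dim B(·)` and `dim N(·)` are constant while the optimal partition `π(·)` varies. -/
def IsNonlinearityInterval (C Cbar : Matrix (Fin n) (Fin n) ℝ)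
    (A : Fin m → Matrix (Fin n) (Fin n) ℝ) (b : Fin m → ℝ) (I : Set ℝ) : Prop :=
  I ⊆ interior (Eset C Cbar A b) ∧ IsOpen I ∧ I.OrdConnected ∧
    (∃ a ∈ I, ∃ c ∈ I, a ≠ c) ∧
    (∀ ε ∈ I, ∀ ε' ∈ I, DimsMatch C Cbar A b ε ε') ∧
    ¬ (∀ ε ∈ I, ∀ ε' ∈ I, SamePartition C Cbar A b ε ε') ∧
    ∀ I' : Set ℝ, I ⊆ I' → I' ⊆ interior (Eset C Cbar A b) → IsOpen I' → I'.OrdConnected →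
      (∀ ε ∈ I', ∀ ε' ∈ I', DimsMatch C Cbar A b ε ε') → I' = I

end

theorem aux_factor {n : ℕ} {X : Matrix (Fin n) (Fin n) ℝ} (hX : X.PosSemidef) :
    ∃ B : Matrix (Fin n) (Fin n) ℝ, X = Bᵀ * B := by
  open scoped MatrixOrder in
  obtain ⟨B, hB⟩ := CStarAlgebra.nonneg_iff_eq_star_mul_self.mp hX.nonneg
  exact ⟨B, by simpa [star_eq_conjTranspose] using hB⟩

theorem aux_psd_trace {n : ℕ} {X Y D : Matrix (Fin n) (Fin n) ℝ} (hX : X.PosSemidef)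
    (hY : Y.PosSemidef) (hD : D.IsSymm) (h : (X * D * Y * D).trace = 0) : X * D * Y = 0 := by
  obtain ⟨B, rfl⟩ := aux_factor hX
  obtain ⟨F, rfl⟩ := aux_factor hY
  have h1 : ((B * D * Fᵀ) * (B * D * Fᵀ)ᴴ).trace = 0 := by
    rw [← h, conjTranspose_eq_transpose_of_trivial]
    simp only [transpose_mul, transpose_transpose, hD.eq]
    rw [show Bᵀ * B * D * (Fᵀ * F) * D = Bᵀ * (B * D * Fᵀ * F * D) by simp only [Matrix.mul_assoc],
      trace_mul_comm Bᵀ]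
    simp only [Matrix.mul_assoc]
  rw [trace_mul_conjTranspose_self_eq_zero_iff] at h1
  calc Bᵀ * B * D * (Fᵀ * F) = Bᵀ * (B * D * Fᵀ) * F := by simp only [Matrix.mul_assoc]
    _ = 0 := by rw [h1]; simp

/-- From the linearised complementarity, `X DS X = 0`. -/
theorem aux_lyap {n : ℕ} {X S DX DS : Matrix (Fin n) (Fin n) ℝ} (hX : X.PosSemidef)
    (hDS : DS.IsSymm) (hXS : X * S = 0) (hSX : S * X = 0)
    (h : DX * S + S * DX + X * DS + DS * X = 0) : X * DS * X = 0 := by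
  have hXs : Xᴴ = X := hX.isHermitian
  have e : X * X * DS * X + X * DS * X * X = 0 := by
    have : X * (DX * S + S * DX + X * DS + DS * X) * X = X * X * DS * X + X * DS * X * X := by
      have e1 : X * (DX * S + S * DX + X * DS + DS * X) * X
        = X * DX * (S * X) + (X * S) * DX * X + X * X * DS * X + X * DS * X * X := by noncomm_ring
      rw [e1, hXS, hSX]; simp
    rw [← this, h]; simp
  have t : (X * X * DS * X * DS).trace = 0 := by
    have e2 := congrArg (fun M => (M * DS).trace) e
    simp only [Matrix.add_mul, trace_add, Matrix.zero_mul, trace_zero] at e2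
    have e3 : (X * DS * X * X * DS).trace = (X * X * DS * X * DS).trace := by
      rw [show X * DS * X * X * DS = (X * DS) * (X * X * DS) by noncomm_ring, trace_mul_comm]
      congr 1; noncomm_ring
    linarith
  have hXX : (X * X).PosSemidef := by
    have := posSemidef_conjTranspose_mul_self X
    rwa [hXs] at this
  have := aux_psd_trace hXX hX hDS t
  have h2 : Xᴴ * X * (DS * X) = 0 := by rw [hXs, ← this]; noncomm_ring
  rw [conjTranspose_mul_self_mul_eq_zero] at h2
  rw [← h2]; noncomm_ring

theorem aux_kernel {n : ℕ} {X S DX DS : Matrix (Fin n) (Fin n) ℝ} (hX : X.PosSemidef)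
    (hS : S.PosSemidef) (hDX : DX.IsSymm) (hDS : DS.IsSymm) (hXS : X * S = 0) (hSX : S * X = 0)
    (hpd : (X + S).PosDef) (horth : (DX * DS).trace = 0)
    (h : DX * S + S * DX + X * DS + DS * X = 0) : DS * X = 0 ∧ DX * S = 0 := by
  have k1 := aux_lyap hX hDS hXS hSX h
  have k2 : S * DX * S = 0 := by
    refine aux_lyap (DX := DS) hS hDX hSX hXS ?_
    rw [← h]; abel
  obtain ⟨R, hR⟩ : ∃ R, R = (X + S)⁻¹ := ⟨_, rfl⟩
  have hdet : IsUnit (X + S).det := (isUnit_iff_isUnit_det _).1 hpd.isUnit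
  have hQR : (X + S) * R = 1 := by rw [hR]; exact mul_nonsing_inv _ hdet
  have hRQ : R * (X + S) = 1 := by rw [hR]; exact nonsing_inv_mul _ hdet
  have hRs : Rᵀ = R := by
    have := hpd.inv.isHermitian
    rw [← hR] at this
    simpa [IsHermitian] using this
  have hcX : R * X = X * R := by
    have : (X + S) * X = X * (X + S) := by rw [Matrix.add_mul, Matrix.mul_add, hXS, hSX]
    calc R * X = R * (X * (X + S)) * R := by rw [Matrix.mul_assoc R, Matrix.mul_assoc X, hQR]; simp
      _ = (R * (X + S)) * X * R := by rw [← this]; noncomm_ring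
      _ = X * R := by rw [hRQ]; simp
  have hcS : R * S = S * R := by
    have : (X + S) * S = S * (X + S) := by rw [Matrix.add_mul, Matrix.mul_add, hXS, hSX]
    calc R * S = R * (S * (X + S)) * R := by rw [Matrix.mul_assoc R, Matrix.mul_assoc S, hQR]; simp
      _ = (R * (X + S)) * S * R := by rw [← this]; noncomm_ring
      _ = S * R := by rw [hRQ]; simp
  have hXs : Xᵀ = X := by simpa [IsHermitian] using hX.isHermitian
  have hSs : Sᵀ = S := by simpa [IsHermitian] using hS.isHermitian
  obtain ⟨P, hP⟩ : ∃ P, P = X * R := ⟨_, rfl⟩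
  obtain ⟨N, hN⟩ : ∃ N, N = S * R := ⟨_, rfl⟩
  have hP' : P = R * X := by rw [hP, hcX]
  have hN' : N = R * S := by rw [hN, hcS]
  have hPN : P + N = 1 := by rw [hP, hN, ← Matrix.add_mul, hQR]
  have hPs : Pᵀ = P := by rw [hP, transpose_mul, hXs, hRs, hcX]
  have hNs : Nᵀ = N := by rw [hN, transpose_mul, hSs, hRs, hcS]
  have hXN : X * N = 0 := by rw [hN, ← Matrix.mul_assoc, hXS]; simp
  have hSP : S * P = 0 := by rw [hP, ← Matrix.mul_assoc, hSX]; simp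
  have hPS : P * S = 0 := by rw [hP', Matrix.mul_assoc, hXS]; simp
  have hNX : N * X = 0 := by rw [hN', Matrix.mul_assoc, hSX]; simp
  have hPX : P * X = X := by
    have : (P + N) * X = X := by rw [hPN]; simp
    rwa [Matrix.add_mul, hNX, add_zero] at this
  have hSN : S * N = S := by
    have : S * (P + N) = S := by rw [hPN]; simp
    rwa [Matrix.mul_add, hSP, zero_add] at this
  have off : P * DX * S + X * DS * N = 0 := by
    have e1 : P * (DX * S + S * DX + X * DS + DS * X) * N
        = P * DX * (S * N) + (P * S) * DX * N + (P * X) * DS * N + P * DS * (X * N) := by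
      noncomm_ring
    rw [h, hXN, hPS, hPX, hSN] at e1
    simpa using e1.symm
  have off2 : P * DX * N = - (X * DS * (R * S * R)) := by
    have e : (P * DX * S + X * DS * N) * R = 0 := by rw [off]; simp
    rw [eq_neg_iff_add_eq_zero, ← e, ← hN']
    nth_rewrite 1 [hN]
    noncomm_ring
  have hNN : N * DX * N = 0 := by
    calc N * DX * N = R * (S * DX * S) * R := by
          nth_rewrite 1 [hN']; rw [hN]; noncomm_ring
      _ = 0 := by rw [k2]; simp
  have hPP : P * DS * P = 0 := by
    calc P * DS * P = R * (X * DS * X) * R := by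
          nth_rewrite 1 [hP']; rw [hP]; noncomm_ring
      _ = 0 := by rw [k1]; simp
  have htr : (P * DX * N * DS).trace = 0 := by
    have e1 : DX * DS = P * DX * P * DS + P * DX * N * DS + N * DX * P * DS + N * DX * N * DS := by
      calc DX * DS = (P + N) * DX * (P + N) * DS := by rw [hPN]; simp
        _ = _ := by noncomm_ring
    have e2 : (P * DX * P * DS).trace = 0 := by
      rw [show P * DX * P * DS = P * (DX * P * DS) by noncomm_ring, trace_mul_comm,
        show DX * P * DS * P = DX * (P * DS * P) by noncomm_ring, hPP]
      simp
    have e3 : (N * DX * P * DS).trace = (P * DX * N * DS).trace := by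
      rw [← trace_transpose]
      simp only [transpose_mul, hPs, hNs, hDX.eq, hDS.eq]
      rw [trace_mul_comm]
      congr 1; noncomm_ring
    rw [e1, trace_add, trace_add, trace_add, e2, e3, hNN] at horth
    simp at horth
    linarith
  have hB : (R * S * R).PosSemidef := by
    have := hS.conjTranspose_mul_mul_same R
    rwa [conjTranspose_eq_transpose_of_trivial, hRs] at this
  have z := aux_psd_trace hX hB hDS (by
    rw [off2] at htr
    simpa using htr)
  have hXDN : X * DS * N = 0 := by
    calc X * DS * N = X * DS * (R * S) * (R * (X + S)) := by rw [hRQ, hN']; simp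
      _ = (X * DS * (R * S * R)) * (X + S) := by noncomm_ring
      _ = 0 := by rw [z]; simp
  have hXD : X * DS = 0 := by
    calc X * DS = X * DS * (P + N) := by rw [hPN]; simp
      _ = (X * DS * X) * R + X * DS * N := by rw [Matrix.mul_add, hP]; noncomm_ring
      _ = 0 := by rw [k1, hXDN]; simp
  refine ⟨?_, ?_⟩
  · have := congrArg transpose hXD
    simpa [transpose_mul, hXs, hDS.eq] using this
  · rw [hXDN, add_zero] at off
    calc DX * S = (P + N) * DX * S := by rw [hPN]; simp
      _ = P * DX * S + R * (S * DX * S) := by rw [Matrix.add_mul, Matrix.add_mul, hN']; noncomm_ring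
      _ = 0 := by rw [off, k2]; simp

theorem aux_open {n : ℕ} : IsOpen {Z : Matrix (Fin n) (Fin n) ℝ | ∀ x : Fin n → ℝ, x ≠ 0 →
    0 < x ⬝ᵥ Z *ᵥ x} := by
  have : {Z : Matrix (Fin n) (Fin n) ℝ | ∀ x : Fin n → ℝ, x ≠ 0 → 0 < x ⬝ᵥ Z *ᵥ x} =
      {Z | ∀ x ∈ Metric.sphere (0 : Fin n → ℝ) 1, 0 < x ⬝ᵥ Z *ᵥ x} := by
    ext Z
    simp only [mem_ofPred_eq, mem_sphere_iff_norm, sub_zero]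
    refine ⟨fun h x hx => h x (by rintro rfl; simp at hx), fun h x hx => ?_⟩
    have hn : 0 < ‖x‖ := norm_pos_iff.2 hx
    have := h (‖x‖⁻¹ • x) (by rw [norm_smul]; simp [hn.ne'])
    rw [mulVec_smul, dotProduct_smul, smul_dotProduct, smul_eq_mul, smul_eq_mul] at this
    have h2 : 0 < ‖x‖⁻¹ := inv_pos.2 hn
    exact (mul_pos_iff_of_pos_left h2).1 ((mul_pos_iff_of_pos_left h2).1 this)
  rw [this, isOpen_iff_eventually]
  intro Z hZ
  refine IsCompact.eventually_forall_of_forall_eventually (isCompact_sphere 0 1) ?_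
  intro x hx
  have hc : Continuous (fun p : Matrix (Fin n) (Fin n) ℝ × (Fin n → ℝ) =>
      p.2 ⬝ᵥ p.1 *ᵥ p.2) := by fun_prop
  exact hc.continuousAt.eventually (lt_mem_nhds (hZ x hx))

/-- Trace functional. -/
def trL {n : ℕ} (F : Matrix (Fin n) (Fin n) ℝ) : Matrix (Fin n) (Fin n) ℝ →ₗ[ℝ] ℝ where
  toFun Z := (F * Z).trace
  map_add' := by intros; simp [Matrix.mul_add]
  map_smul' := by intros; simp

theorem trL_symm {n : ℕ} {F : Matrix (Fin n) (Fin n) ℝ} (hF : F.IsSymm)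
    (Z : Matrix (Fin n) (Fin n) ℝ) : (F * Zᵀ).trace = (F * Z).trace := by
  rw [← trace_transpose, transpose_mul, transpose_transpose, hF.eq, trace_mul_comm]

theorem aux_dual {n m : ℕ} (G : Matrix (Fin n) (Fin n) ℝ)
    (A : Fin m → Matrix (Fin n) (Fin n) ℝ) (b : Fin m → ℝ) (hG : G.IsSymm)
    (hA : ∀ i, (A i).IsSymm) (X X0 : Matrix (Fin n) (Fin n) ℝ) (hX : PrimalFeasible A b X)
    (hopt : ∀ X', PrimalFeasible A b X' → (G * X).trace ≤ (G * X').trace)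
    (hX0 : PrimalFeasible A b X0) (hpd : X0.PosDef) :
    ∃ y : Fin m → ℝ, (G - ∑ i, y i • A i).PosSemidef ∧
      ((G - ∑ i, y i • A i) * X).trace = 0 := by
  by_cases hspan : G ∈ Submodule.span ℝ (Set.range A)
  · obtain ⟨c, hc⟩ := (Submodule.mem_span_range_iff_exists_fun ℝ).1 hspan
    refine ⟨c, ?_⟩
    rw [hc, sub_self]
    exact ⟨PosSemidef.zero, by simp⟩
  -- a descent direction
  obtain ⟨D, hDA, hDG⟩ : ∃ D : Matrix (Fin n) (Fin n) ℝ, (∀ i, (A i * D).trace = 0) ∧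
      (G * D).trace < 0 := by
    by_contra hno
    push Not at hno
    apply hspan
    have hker : ⨅ i, LinearMap.ker (trL (A i)) ≤ LinearMap.ker (trL G) := by
      intro D hD
      rw [Submodule.mem_iInf] at hD
      have hD' : ∀ i, (A i * D).trace = 0 := fun i => hD i
      have h1 := hno D hD'
      have h2 := hno (-D) (by intro i; simp [hD' i])
      simp at h2
      exact le_antisymm h2 h1
    obtain ⟨c, hc⟩ := (Submodule.mem_span_range_iff_exists_fun ℝ).1
      (mem_span_of_iInf_ker_le_ker hker)
    refine (Submodule.mem_span_range_iff_exists_fun ℝ).2 ⟨c, ?_⟩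
    have : ∀ Z, ((∑ i, c i • A i - G) * Z).trace = 0 := by
      intro Z
      have := LinearMap.congr_fun hc Z
      simp [trL] at this
      simp [Matrix.sub_mul, Matrix.sum_mul, this, trace_sum]
    have h3 := this ((∑ i, c i • A i - G)ᴴ)
    rw [trace_mul_conjTranspose_self_eq_zero_iff] at h3
    exact sub_eq_zero.1 h3
  set U := {Z : Matrix (Fin n) (Fin n) ℝ | ∀ x : Fin n → ℝ, x ≠ 0 → 0 < x ⬝ᵥ Z *ᵥ x} with hU
  have hUopen : IsOpen U := aux_open
  have hUconv : Convex ℝ U := by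
    intro Z hZ Z' hZ' s t hs ht hst x hx
    have h1 := hZ x hx
    have h2 := hZ' x hx
    rw [add_mulVec, smul_mulVec, smul_mulVec, dotProduct_add, dotProduct_smul, dotProduct_smul,
      smul_eq_mul, smul_eq_mul]
    rcases hs.eq_or_lt with rfl | hs
    · have : t = 1 := by linarith
      subst this; simpa using h2
    · have := mul_pos hs h1
      have := mul_nonneg ht h2.le
      linarith
  have hX0U : X0 ∈ U := fun x hx => by simpa using hpd.dotProduct_mulVec_pos hx
  let K : Submodule ℝ (Matrix (Fin n) (Fin n) ℝ) :=
    ((⨅ i, LinearMap.ker (trL (A i))) ⊓ LinearMap.ker (trL G)) ⊔ Submodule.span ℝ {X}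
  have hXnn : ∀ x, 0 ≤ x ⬝ᵥ X *ᵥ x := fun x => by simpa using hX.2.2.dotProduct_mulVec_nonneg x
  have hdisj : Disjoint U (K : Set (Matrix (Fin n) (Fin n) ℝ)) := by
    rw [Set.disjoint_left]
    intro Z hZ hZK
    obtain ⟨Y, hY, W, hW, rfl⟩ := Submodule.mem_sup.1 hZK
    obtain ⟨τ, rfl⟩ := Submodule.mem_span_singleton.1 hW
    have hYA : ∀ i, (A i * Y).trace = 0 := fun i => (Submodule.mem_iInf _).1 hY.1 i
    have hYG : (G * Y).trace = 0 := hY.2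
    -- move to positive multiple of `X`
    have hV : Y + (|τ| + 1) • X ∈ U := by
      intro x hx
      have h1 := hZ x hx
      rw [add_mulVec, smul_mulVec, dotProduct_add, dotProduct_smul, smul_eq_mul] at h1 ⊢
      have h2 := mul_nonneg (show 0 ≤ |τ| + 1 - τ by linarith [le_abs_self τ]) (hXnn x)
      linarith
    obtain ⟨σ, hσ, hσ'⟩ : ∃ σ : ℝ, σ = |τ| + 1 ∧ 0 < σ := ⟨_, rfl, by positivity⟩
    rw [← hσ] at hV
    have hcont : Continuous (fun δ : ℝ => Y + σ • X + δ • D) := by fun_prop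
    have hev : ∀ᶠ δ in nhds (0 : ℝ), Y + σ • X + δ • D ∈ U :=
      hcont.continuousAt.eventually (by simpa using hUopen.mem_nhds hV)
    obtain ⟨δ, hδU, hδ⟩ := ((hev.filter_mono nhdsWithin_le_nhds).and
      (self_mem_nhdsWithin (s := Set.Ioi (0:ℝ)))).exists
    have hδ : 0 < δ := hδ
    set Z := Y + σ • X + δ • D with hZdef
    have tr_sym : ∀ F : Matrix (Fin n) (Fin n) ℝ, F.IsSymm →
        (F * ((2 * σ)⁻¹ • (Z + Zᵀ))).trace = σ⁻¹ * (F * Z).trace := by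
      intro F hF
      rw [Matrix.mul_smul, trace_smul, Matrix.mul_add, trace_add, trL_symm hF, smul_eq_mul]
      field_simp; ring
    have hfeas : PrimalFeasible A b ((2 * σ)⁻¹ • (Z + Zᵀ)) := by
      have hs : ((2 * σ)⁻¹ • (Z + Zᵀ)).IsSymm := by
        unfold IsSymm; rw [transpose_smul, transpose_add, transpose_transpose, add_comm]
      refine ⟨hs, fun i => ?_, PosSemidef.of_dotProduct_mulVec_nonneg
        (by simpa [IsHermitian] using hs.eq) fun x => ?_⟩
      · rw [tr_sym _ (hA i), hZdef]
        simp [Matrix.mul_add, hYA i, hDA i, hX.2.1 i]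
        field_simp
      · have h0 : 0 ≤ x ⬝ᵥ Z *ᵥ x := by
          by_cases hx : x = 0
          · simp [hx]
          · exact (hδU x hx).le
        have h1 : x ⬝ᵥ Zᵀ *ᵥ x = x ⬝ᵥ Z *ᵥ x := by
          rw [mulVec_transpose, dotProduct_comm, dotProduct_mulVec]
        simp only [star_trivial]
        rw [smul_mulVec, add_mulVec, dotProduct_smul, dotProduct_add, h1, smul_eq_mul]
        positivity
    have := hopt _ hfeas
    rw [tr_sym _ hG, hZdef] at this
    simp [Matrix.mul_add, hYG] at this
    rw [mul_add, inv_mul_cancel_left₀ hσ'.ne'] at this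
    have h5 : σ⁻¹ * (δ * (G * D).trace) < 0 :=
      mul_neg_of_pos_of_neg (inv_pos.2 hσ') (mul_neg_of_pos_of_neg hδ hDG)
    linarith
  obtain ⟨f, u, hf1, hf2⟩ := geometric_hahn_banach_open hUconv hUopen K.convex hdisj
  have hu : u ≤ 0 := by simpa using hf2 0 K.zero_mem
  have hfK : ∀ Z ∈ K, f Z = 0 := by
    intro Z hZ
    by_contra hne
    have := hf2 (((u - 1) / f Z) • Z) (K.smul_mem _ hZ)
    rw [map_smul, smul_eq_mul, div_mul_cancel₀ _ hne] at this
    linarith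
  -- represent `f`
  have hker : ⨅ o : Option (Fin m), LinearMap.ker (o.elim (trL G) (fun i => trL (A i))) ≤
      LinearMap.ker (f : Matrix (Fin n) (Fin n) ℝ →ₗ[ℝ] ℝ) := by
    intro Z hZ
    rw [Submodule.mem_iInf] at hZ
    exact hfK Z (Submodule.mem_sup_left ⟨(Submodule.mem_iInf _).2 fun i => hZ (some i), hZ none⟩)
  obtain ⟨c, hc⟩ := (Submodule.mem_span_range_iff_exists_fun ℝ).1
    (mem_span_of_iInf_ker_le_ker hker)
  have hfrep : ∀ Z, f Z = c none * (G * Z).trace + ∑ i, c (some i) * (A i * Z).trace := by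
    intro Z
    have := LinearMap.congr_fun hc Z
    simp [Fintype.sum_option, trL] at this
    rw [← this]
  have hfX : f X = 0 := hfK X (Submodule.mem_sup_right (Submodule.mem_span_singleton_self X))
  have hfX0 : f X0 < 0 := (hf1 X0 hX0U).trans_le hu
  have hα : c none < 0 := by
    rw [hfrep] at hfX hfX0
    simp only [hX.2.1, hX0.2.1] at hfX hfX0
    have h6 := hopt X0 hX0
    by_contra hge
    push Not at hge
    have := mul_nonneg hge (sub_nonneg.2 h6)
    linarith [mul_sub (c none) (G * X0).trace (G * X).trace]
  have key : ∀ Z, ((G - ∑ i, (-(c (some i)) / c none) • A i) * Z).trace = f Z / c none := by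
    intro Z
    rw [hfrep]
    simp only [Matrix.sub_mul, Matrix.sum_mul, trace_sub, trace_sum, Matrix.smul_mul, trace_smul,
      smul_eq_mul]
    rw [add_div, mul_div_cancel_left₀ _ hα.ne, Finset.sum_div, sub_eq_add_neg,
      ← Finset.sum_neg_distrib]
    congr 1
    refine Finset.sum_congr rfl fun i _ => ?_
    ring
  refine ⟨fun i => -(c (some i)) / c none, ?_, ?_⟩
  · refine PosSemidef.of_dotProduct_mulVec_nonneg ?_ fun x => ?_
    · have : (G - ∑ i, (-(c (some i)) / c none) • A i)ᵀ
          = G - ∑ i, (-(c (some i)) / c none) • A i := by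
        rw [transpose_sub, transpose_sum, hG.eq]
        simp only [transpose_smul, (hA _).eq]
      simpa [IsHermitian] using this
    · have e : star x ⬝ᵥ (G - ∑ i, (-(c (some i)) / c none) • A i) *ᵥ x
          = f (vecMulVec x x) / c none := by
        rw [← key, mul_vecMulVec, trace_vecMulVec, star_trivial, dotProduct_comm]
      rw [e]
      refine div_nonneg_of_nonpos ?_ hα.le
      have hx : ∀ δ : ℝ, 0 < δ → f (vecMulVec x x) ≤ 0 + δ := by
        intro δ hδ
        have hδ' : 0 < δ / (- f X0) := div_pos hδ (by linarith)
        have hm : vecMulVec x x + (δ / (- f X0)) • X0 ∈ U := by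
          intro z hz
          have h7 := mul_pos hδ' (hX0U z hz)
          rw [add_mulVec, smul_mulVec, dotProduct_add, dotProduct_smul, smul_eq_mul,
            vecMulVec_mulVec]
          have h8 : 0 ≤ z ⬝ᵥ (MulOpposite.op (x ⬝ᵥ z) • x) := by
            simp only [op_smul_eq_smul, dotProduct_smul, smul_eq_mul]
            rw [dotProduct_comm z x]
            exact mul_self_nonneg _
          linarith
        have := (hf1 _ hm).trans_le hu
        rw [map_add, map_smul, smul_eq_mul, div_mul_eq_mul_div, mul_div_assoc, div_neg,
          div_self hfX0.ne] at this
        linarith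
      exact le_of_forall_pos_le_add hx
  · rw [key, hfX, zero_div]

theorem aux_comp {n m : ℕ} (C Cbar : Matrix (Fin n) (Fin n) ℝ)
    (A : Fin m → Matrix (Fin n) (Fin n) ℝ) (b : Fin m → ℝ)
    (hSA : StandingAssumptions C Cbar A b) (ε : ℝ) (X S : Matrix (Fin n) (Fin n) ℝ)
    (y : Fin m → ℝ) (hX : X ∈ PrimalOpt C Cbar A b ε) (hS : (y, S) ∈ DualOpt C Cbar A b ε) :
    X * S = 0 := by
  obtain ⟨hC, hCb, hA, -, X0, -, -, hX0, hpd, -, -⟩ := hSA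
  have hG : (C + ε • Cbar).IsSymm := by
    unfold IsSymm; rw [transpose_add, transpose_smul, hC.eq, hCb.eq]
  obtain ⟨y', hp, ht⟩ := aux_dual (C + ε • Cbar) A b hG hA X X0 hX.1 hX.2 hX0 hpd
  have hfe : DualFeasible C Cbar A ε y' (C + ε • Cbar - ∑ i, y' i • A i) :=
    ⟨by simpa [IsHermitian, IsSymm] using hp.isHermitian, by abel, hp⟩
  have h1 := hS.2 _ _ hfe
  have hrep : ∀ z : Fin m → ℝ, ((∑ i, z i • A i) * X).trace = ∑ i, b i * z i := by
    intro z
    simp [Matrix.sum_mul, trace_sum, hX.1.2.1, mul_comm]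
  rw [Matrix.sub_mul, trace_sub, hrep] at ht
  have h2 : ((C + ε • Cbar) * X).trace = ∑ i, b i * y i + (S * X).trace := by
    rw [← hS.1.2.1, Matrix.add_mul, trace_add, hrep]
  have h3 : (S * X).trace ≤ 0 := by simp only at h1; linarith
  have h4 : 0 ≤ (S * X).trace := by
    obtain ⟨B, hB⟩ := aux_factor hX.1.2.2
    have := (hS.1.2.2.mul_mul_conjTranspose_same B).trace_nonneg
    rw [conjTranspose_eq_transpose_of_trivial, trace_mul_comm, ← Matrix.mul_assoc, ← hB,
      trace_mul_comm] at this
    exact this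
  have := aux_psd_trace (D := 1) hX.1.2.2 hS.1.2.2 transpose_one (by
    simp only [Matrix.mul_one]; rw [trace_mul_comm]; exact le_antisymm h3 h4)
  simpa using this

theorem aux_basis {n k : ℕ} (W : Submodule ℝ (EuclideanSpace ℝ (Fin n)))
    (hk : Module.finrank ℝ W = k) : ∃ M : Matrix (Fin n) (Fin k) ℝ, Mᵀ * M = 1 ∧
      LinearMap.range M.mulVecLin = W.map (WithLp.linearEquiv 2 ℝ (Fin n → ℝ)).toLinearMap ∧
      ∀ j, WithLp.toLp 2 (M.col j) ∈ W := by
  subst hk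
  let e := stdOrthonormalBasis ℝ W
  refine ⟨Matrix.of fun i j => (e j : EuclideanSpace ℝ (Fin n)) i, ?_, ?_, ?_⟩
  · ext i j
    have h := orthonormal_iff_ite.1 e.orthonormal i j
    rw [Submodule.coe_inner] at h
    simp only [Matrix.mul_apply, transpose_apply, of_apply, Matrix.one_apply]
    rw [← h, PiLp.inner_apply]
    simp [mul_comm]
  · rw [range_mulVecLin]
    have h : Submodule.span ℝ (Set.range e) = ⊤ := by
      rw [← e.coe_toBasis]; exact e.toBasis.span_eq
    have h2 : W = Submodule.span ℝ (Set.range fun j => (e j : EuclideanSpace ℝ (Fin n))) := by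
      have := congrArg (Submodule.map W.subtype) h
      rw [Submodule.map_span, Submodule.map_top, Submodule.range_subtype, ← Set.range_comp] at this
      exact this.symm
    conv_rhs => rw [h2]
    rw [Submodule.map_span, ← Set.range_comp]
    rfl
  · intro j
    exact (e j).2

theorem aux_split {n : ℕ} (V : Submodule ℝ (Fin n → ℝ)) :
    ∃ (r : ℕ) (M₁ : Matrix (Fin n) (Fin r) ℝ) (M₂ : Matrix (Fin n) (Fin (n - r)) ℝ),
    M₁ᵀ * M₁ = 1 ∧ M₂ᵀ * M₂ = 1 ∧ M₁ᵀ * M₂ = 0 ∧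
    LinearMap.range M₁.mulVecLin = V ∧ M₁ * M₁ᵀ + M₂ * M₂ᵀ = 1 := by
  let W : Submodule ℝ (EuclideanSpace ℝ (Fin n)) :=
    V.map (WithLp.linearEquiv 2 ℝ (Fin n → ℝ)).symm.toLinearMap
  obtain ⟨M₁, h1, hr, hm1⟩ := aux_basis W rfl
  have hfr : Module.finrank ℝ W + Module.finrank ℝ Wᗮ = n := by
    rw [Submodule.finrank_add_finrank_orthogonal]; simp
  obtain ⟨M₂, h2, -, hm2⟩ := aux_basis (k := n - Module.finrank ℝ W) Wᗮ (by omega)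
  have h12 : M₁ᵀ * M₂ = 0 := by
    ext i j
    have := Submodule.inner_right_of_mem_orthogonal (hm1 i) (hm2 j)
    rw [PiLp.inner_apply] at this
    simpa [Matrix.mul_apply, mul_comm] using this
  refine ⟨_, M₁, M₂, h1, h2, h12, ?_, ?_⟩
  · rw [hr, ← Submodule.map_comp]
    simp
  · have h21 : M₂ᵀ * M₁ = 0 := by
      have := congrArg transpose h12
      simpa [transpose_mul] using this
    have hc : (fromRows M₁ᵀ M₂ᵀ) * (fromCols M₁ M₂) = 1 := by
      rw [fromRows_mul_fromCols, h1, h2, h12, h21, fromBlocks_one]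
    have hc2 := (Matrix.mul_eq_one_comm_of_card_eq _ _ _ (by
      simp only [Fintype.card_sum, Fintype.card_fin]; omega)).1 hc
    rwa [fromCols_mul_fromRows] at hc2

theorem aux_cols {n k p : ℕ} (M : Matrix (Fin n) (Fin k) ℝ) (X : Matrix (Fin n) (Fin p) ℝ)
    (h : LinearMap.range X.mulVecLin ≤ LinearMap.range M.mulVecLin) : ∃ K : Matrix (Fin k) (Fin p) ℝ, X = M * K := by
  have : ∀ j, ∃ v, M *ᵥ v = X.col j := fun j =>
    h ⟨Pi.single j 1, by simp⟩
  choose v hv using this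
  refine ⟨Matrix.of fun i j => v j i, ?_⟩
  ext i j
  have := congrFun (hv j) i
  simp only [col_apply] at this
  rw [← this]; rfl

theorem aux_backward {n m : ℕ} (A : Fin m → Matrix (Fin n) (Fin n) ℝ)
    (hA : ∀ i, (A i).IsSymm) {X S : Matrix (Fin n) (Fin n) ℝ} (hX : X.PosSemidef)
    (hS : S.PosSemidef) (hXS : X * S = 0) (hSX : S * X = 0) (hpd : (X + S).PosDef)
    (hP : PrimalNondeg A X) (hD : DualNondeg A S) : JNonsingular A X S := by
  intro DX DS Dy hDX hDS h1 h2 h3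
  have hDSe : DS = -∑ i, Dy i • A i := by rw [eq_neg_iff_add_eq_zero, add_comm]; exact h2
  have horth : (DX * DS).trace = 0 := by
    rw [trace_mul_comm, hDSe]
    simp [Matrix.sum_mul, trace_sum, h1]
  obtain ⟨k1, k2⟩ := aux_kernel hX hS hDX hDS hXS hSX hpd horth h3
  have hDy : Dy = 0 := by
    obtain ⟨r, M₁, M₂, -, -, -, hr, hli⟩ := hP
    obtain ⟨K, hK⟩ := aux_cols X M₁ hr.le
    have z1 : DS * M₁ = 0 := by rw [hK, ← Matrix.mul_assoc, k1]; simp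
    have z2 : M₁ᵀ * DS = 0 := by
      have := congrArg transpose z1
      simpa [transpose_mul, hDS.eq] using this
    have hsum : ∑ i, Dy i • A i = -DS := by rw [hDSe, neg_neg]
    rw [Fintype.linearIndependent_iff] at hli
    funext i
    refine hli Dy ?_ i
    have e : ∑ i, Dy i • fromBlocks (M₁ᵀ * (A i) * M₁) (M₁ᵀ * (A i) * M₂) (M₂ᵀ * (A i) * M₁)
          (0 : Matrix (Fin (n - r)) (Fin (n - r)) ℝ)
        = fromBlocks (M₁ᵀ * (∑ i, Dy i • A i) * M₁) (M₁ᵀ * (∑ i, Dy i • A i) * M₂)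
          (M₂ᵀ * (∑ i, Dy i • A i) * M₁) 0 := by
      ext a b
      rcases a with a | a <;> rcases b with b | b <;>
        simp [Matrix.sum_apply, Matrix.mul_sum, Matrix.sum_mul]
    rw [e, hsum]
    have z3 : M₂ᵀ * (-DS) * M₁ = 0 := by rw [Matrix.mul_assoc, Matrix.neg_mul, z1]; simp
    have z4 : M₁ᵀ * (-DS) = 0 := by rw [Matrix.mul_neg, z2]; simp
    rw [z3, z4]
    simp
  refine ⟨?_, hDy, by rw [hDSe, hDy]; simp⟩
  obtain ⟨k, N, hN, hr, hsp⟩ := hD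
  have hSs : Sᵀ = S := by simpa [IsHermitian] using hS.isHermitian
  have k3 : S * DX = 0 := by
    have := congrArg transpose k2
    simpa [transpose_mul, hSs, hDX.eq] using this
  obtain ⟨K, hK⟩ := aux_cols N DX (by
    rw [hr]
    rintro _ ⟨v, rfl⟩
    simp [k3])
  have e1 : N * (Nᵀ * DX) = DX := by
    rw [hK, ← Matrix.mul_assoc Nᵀ, hN]; simp
  have e2 : DX * N * Nᵀ = DX := by
    have := congrArg transpose e1
    simpa [transpose_mul, hDX.eq, Matrix.mul_assoc] using this
  have e3 : DX = N * (Nᵀ * DX * N) * Nᵀ := by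
    calc DX = N * (Nᵀ * (DX * N * Nᵀ)) := by rw [e2, e1]
      _ = _ := by simp only [Matrix.mul_assoc]
  have hW : (Nᵀ * DX * N)ᵀ = Nᵀ * DX * N := by
    simp [transpose_mul, hDX.eq, Matrix.mul_assoc]
  obtain ⟨c, hc⟩ := (Submodule.mem_span_range_iff_exists_fun ℝ).1 (hsp _ hW)
  have ht : ((Nᵀ * DX * N) * (Nᵀ * DX * N)ᴴ).trace = 0 := by
    rw [conjTranspose_eq_transpose_of_trivial, hW]
    nth_rewrite 1 [← hc]
    rw [Matrix.sum_mul, trace_sum]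
    refine Finset.sum_eq_zero fun i _ => ?_
    rw [Matrix.smul_mul, trace_smul,
      show Nᵀ * A i * N * (Nᵀ * DX * N) = Nᵀ * (A i * (N * (Nᵀ * DX) * N)) by
        simp only [Matrix.mul_assoc], trace_mul_comm, e1, Matrix.mul_assoc, e2, h1]
    simp
  rw [trace_mul_conjTranspose_self_eq_zero_iff] at ht
  rw [e3, ht]; simp

theorem aux_pd {n m : ℕ} (A : Fin m → Matrix (Fin n) (Fin n) ℝ)
    (hA : ∀ i, (A i).IsSymm) {X S : Matrix (Fin n) (Fin n) ℝ} (hX : X.PosSemidef)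
    (hS : S.PosSemidef) (hJ : JNonsingular A X S) : (X + S).PosDef := by
  have hXs : Xᵀ = X := by simpa [IsHermitian] using hX.isHermitian
  have hSs : Sᵀ = S := by simpa [IsHermitian] using hS.isHermitian
  by_contra hno
  obtain ⟨u, hu, hXu, hSu⟩ : ∃ u : Fin n → ℝ, u ≠ 0 ∧ X *ᵥ u = 0 ∧ S *ᵥ u = 0 := by
    by_contra hall
    push Not at hall
    apply hno
    refine PosDef.of_dotProduct_mulVec_pos (hX.add hS).isHermitian fun u hu => ?_
    have a1 := hX.dotProduct_mulVec_nonneg u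
    have a2 := hS.dotProduct_mulVec_nonneg u
    rw [add_mulVec, dotProduct_add]
    rcases a1.eq_or_lt with h | h
    · rcases a2.eq_or_lt with h' | h'
      · exact absurd ((hS.dotProduct_mulVec_zero_iff u).1 h'.symm)
          (hall u hu ((hX.dotProduct_mulVec_zero_iff u).1 h.symm))
      · linarith
    · linarith
  let Sy : Submodule ℝ (Matrix (Fin n) (Fin n) ℝ) :=
    { carrier := {M | Mᵀ = M}
      add_mem' := by
        intro a b ha hb
        simp only [Set.mem_ofPred_eq] at *
        rw [transpose_add, ha, hb]
      zero_mem' := by simp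
      smul_mem' := by
        intro c a ha
        simp only [Set.mem_ofPred_eq] at *
        rw [transpose_smul, ha] }
  have hsum : ∀ y : Fin m → ℝ, (∑ i, y i • A i)ᵀ = ∑ i, y i • A i := by
    intro y
    rw [transpose_sum]
    simp only [transpose_smul, (hA _).eq]
  let T : (Sy × (Fin m → ℝ)) →ₗ[ℝ] (Sy × (Fin m → ℝ)) :=
    { toFun := fun p =>
        (⟨(p.1 : Matrix (Fin n) (Fin n) ℝ) * S + S * p.1
            - (X * (∑ i, p.2 i • A i) + (∑ i, p.2 i • A i) * X), by
          have h1 : (p.1 : Matrix (Fin n) (Fin n) ℝ)ᵀ = p.1 := p.1.2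
          change (_)ᵀ = _
          simp only [transpose_sub, transpose_add, transpose_mul, hXs, hSs, h1, hsum]
          abel⟩, fun i => (A i * p.1).trace)
      map_add' := by
        intro p q
        have hs : ∑ i, (p + q).2 i • A i = ∑ i, p.2 i • A i + ∑ i, q.2 i • A i := by
          simp [add_smul, Finset.sum_add_distrib]
        ext1
        · apply Subtype.ext
          simp only [hs]
          simp only [Prod.fst_add, Submodule.coe_add]
          noncomm_ring
        · funext i
          simp [Matrix.mul_add]
      map_smul' := by
        intro c p
        have hs : ∑ i, (c • p).2 i • A i = c • ∑ i, p.2 i • A i := by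
          simp [Finset.smul_sum, smul_smul]
        ext1
        · apply Subtype.ext
          simp only [hs]
          simp [smul_sub, smul_add]
        · funext i
          simp }
  have hinj : Function.Injective T := by
    rw [← LinearMap.ker_eq_bot, LinearMap.ker_eq_bot']
    intro p hp
    have hp1 : (p.1 : Matrix (Fin n) (Fin n) ℝ) * S + S * p.1
            - (X * (∑ i, p.2 i • A i) + (∑ i, p.2 i • A i) * X) = 0 :=
      congrArg (fun q : Sy × (Fin m → ℝ) => (q.1 : Matrix (Fin n) (Fin n) ℝ)) hp
    have hp2 : ∀ i, (A i * p.1).trace = 0 := fun i =>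
      congrFun (congrArg Prod.snd hp) i
    obtain ⟨z1, z2, -⟩ := hJ p.1 (-∑ i, p.2 i • A i) p.2 p.1.2
      (by unfold IsSymm; rw [transpose_neg, hsum]) hp2 (by simp) (by
        rw [← hp1]; noncomm_ring)
    exact Prod.ext (Subtype.ext z1) z2
  have hsurj := LinearMap.injective_iff_surjective.1 hinj
  obtain ⟨p, hp⟩ := hsurj (⟨vecMulVec u u, by
    change (_)ᵀ = _
    ext i j; simp [vecMulVec_apply, mul_comm]⟩, 0)
  have hp1 : (p.1 : Matrix (Fin n) (Fin n) ℝ) * S + S * p.1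
            - (X * (∑ i, p.2 i • A i) + (∑ i, p.2 i • A i) * X) = vecMulVec u u :=
      congrArg (fun q : Sy × (Fin m → ℝ) => (q.1 : Matrix (Fin n) (Fin n) ℝ)) hp
  have huX : u ᵥ* X = 0 := by rw [← hXs, vecMul_transpose, hXu]
  have huS : u ᵥ* S = 0 := by rw [← hSs, vecMul_transpose, hSu]
  have h9 := congrArg (fun M => u ⬝ᵥ M *ᵥ u) hp1
  simp only [sub_mulVec, add_mulVec, ← mulVec_mulVec, hXu, hSu, mulVec_zero, dotProduct_sub,
    dotProduct_add, dotProduct_zero, dotProduct_mulVec u X, dotProduct_mulVec u S, huX, huS,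
    zero_dotProduct, vecMulVec_mulVec] at h9
  simp [dotProduct_smul] at h9
  exact hu h9

theorem aux_forward {n m : ℕ} (A : Fin m → Matrix (Fin n) (Fin n) ℝ)
    (hA : ∀ i, (A i).IsSymm) {X S : Matrix (Fin n) (Fin n) ℝ} (hX : X.PosSemidef)
    (hS : S.PosSemidef) (hJ : JNonsingular A X S) : PrimalNondeg A X ∧ DualNondeg A S := by
  have hXs : Xᵀ = X := by simpa [IsHermitian] using hX.isHermitian
  have hSs : Sᵀ = S := by simpa [IsHermitian] using hS.isHermitian
  constructor
  · obtain ⟨r, M₁, M₂, h1, h2, h12, hr, hone⟩ := aux_split (LinearMap.range X.mulVecLin)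
    refine ⟨r, M₁, M₂, h1, h2, h12, hr, ?_⟩
    rw [Fintype.linearIndependent_iff]
    intro g hg
    have hsum : (∑ i, g i • A i)ᵀ = ∑ i, g i • A i := by
      rw [transpose_sum]
      simp only [transpose_smul, (hA _).eq]
    have e : ∑ i, g i • fromBlocks (M₁ᵀ * (A i) * M₁) (M₁ᵀ * (A i) * M₂) (M₂ᵀ * (A i) * M₁)
          (0 : Matrix (Fin (n - r)) (Fin (n - r)) ℝ)
        = fromBlocks (M₁ᵀ * (∑ i, g i • A i) * M₁) (M₁ᵀ * (∑ i, g i • A i) * M₂)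
          (M₂ᵀ * (∑ i, g i • A i) * M₁) 0 := by
      ext a b
      rcases a with a | a <;> rcases b with b | b <;>
        simp [Matrix.sum_apply, Matrix.mul_sum, Matrix.sum_mul]
    rw [e] at hg
    obtain ⟨D, hD⟩ : ∃ D, D = ∑ i, g i • A i := ⟨_, rfl⟩
    rw [← hD] at hg hsum
    rw [← fromBlocks_zero, fromBlocks_inj] at hg
    obtain ⟨g1, g2, -, -⟩ := hg
    have z : M₁ᵀ * D = 0 := by
      calc M₁ᵀ * D = M₁ᵀ * D * (M₁ * M₁ᵀ + M₂ * M₂ᵀ) := by rw [hone]; simp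
        _ = (M₁ᵀ * D * M₁) * M₁ᵀ + (M₁ᵀ * D * M₂) * M₂ᵀ := by
          simp only [Matrix.mul_add, Matrix.mul_assoc]
        _ = 0 := by rw [g1, g2]; simp
    have z' : D * M₁ = 0 := by
      have := congrArg transpose z
      simpa [transpose_mul, hsum] using this
    obtain ⟨K, hK⟩ := aux_cols M₁ X hr.ge
    have z3 : D * X = 0 := by rw [hK, ← Matrix.mul_assoc, z']; simp
    have z4 : X * D = 0 := by
      have := congrArg transpose z3
      simpa [transpose_mul, hsum, hXs] using this
    have := (hJ 0 (-D) g transpose_zero (by unfold IsSymm; rw [transpose_neg, hsum]) (by simp)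
      (by rw [hD]; simp) (by simp [z3, z4])).2.1
    intro i; rw [this]; rfl
  · obtain ⟨k, N, -, hN, -, -, hr, -⟩ := aux_split (LinearMap.ker S.mulVecLin)
    refine ⟨k, N, hN, hr, ?_⟩
    intro W hW
    by_contra hnot
    obtain ⟨f, hfW, hf⟩ := Submodule.exists_le_ker_of_notMem hnot
    -- represent `f` as a trace
    obtain ⟨F, hF⟩ : ∃ F : Matrix (Fin k) (Fin k) ℝ, ∀ Z, f Z = (F * Z).trace := by
      refine ⟨Matrix.of fun i j => f (Matrix.single j i 1), fun Z => ?_⟩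
      conv_lhs => rw [Matrix.matrix_eq_sum_single Z]
      simp only [map_sum, Matrix.trace, Matrix.diag, Matrix.mul_apply, of_apply]
      rw [Finset.sum_comm]
      refine Finset.sum_congr rfl fun i _ => Finset.sum_congr rfl fun j _ => ?_
      have : Matrix.single j i (Z j i) = Z j i • Matrix.single j i (1 : ℝ) := by
        simp [Matrix.smul_single]
      rw [this, map_smul, smul_eq_mul, mul_comm]
    have hFs : (F + Fᵀ)ᵀ = F + Fᵀ := by rw [transpose_add, transpose_transpose, add_comm]
    have htr : ∀ Z : Matrix (Fin k) (Fin k) ℝ, Zᵀ = Z → ((F + Fᵀ) * Z).trace = 2 * f Z := by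
      intro Z hZ
      have : (Fᵀ * Z).trace = (F * Z).trace := by
        rw [← trace_transpose, transpose_mul, transpose_transpose, hZ, trace_mul_comm]
      rw [Matrix.add_mul, trace_add, this, hF]; ring
    have hSN : S * N = 0 := by
      ext i j
      have hm : N.col j ∈ LinearMap.ker S.mulVecLin := by
        rw [← hr]; exact ⟨Pi.single j 1, by simp⟩
      exact congrFun (LinearMap.mem_ker.1 hm) i
    have hNS : Nᵀ * S = 0 := by
      have := congrArg transpose hSN
      simpa [transpose_mul, hSs] using this
    have hDX := (hJ (N * (F + Fᵀ) * Nᵀ) 0 0 (by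
        unfold IsSymm
        rw [transpose_mul, transpose_mul, transpose_transpose, hFs, Matrix.mul_assoc])
      transpose_zero (by
        intro i
        have hmem : Nᵀ * A i * N ∈ Submodule.span ℝ (Set.range fun i => Nᵀ * (A i) * N) :=
          Submodule.subset_span ⟨i, rfl⟩
        have h0 : f (Nᵀ * A i * N) = 0 := hf hmem
        have h1 := htr (Nᵀ * A i * N) (by simp [transpose_mul, (hA i).eq, Matrix.mul_assoc])
        rw [h0, mul_zero] at h1
        rw [← h1, ← Matrix.mul_assoc, trace_mul_comm, ← Matrix.mul_assoc, ← Matrix.mul_assoc,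
          trace_mul_comm, Matrix.mul_assoc])
      (by simp) (by
        have a1 : N * (F + Fᵀ) * Nᵀ * S = 0 := by rw [Matrix.mul_assoc, hNS]; simp
        have a2 : S * (N * (F + Fᵀ) * Nᵀ) = 0 := by
          rw [← Matrix.mul_assoc, ← Matrix.mul_assoc, hSN]; simp
        rw [a1, a2]; simp)).1
    have hz : F + Fᵀ = 0 := by
      calc F + Fᵀ = (Nᵀ * N) * (F + Fᵀ) * (Nᵀ * N) := by rw [hN]; simp
        _ = Nᵀ * (N * (F + Fᵀ) * Nᵀ) * N := by simp only [Matrix.mul_assoc]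
        _ = 0 := by rw [hDX]; simp
    have h2 := htr W hW
    rw [hz, Matrix.zero_mul, trace_zero] at h2
    exact hfW (by linarith)

/-- the Jacobian at a maximally complementary solution is nonsingular iff the
solution is strictly complementary, primal nondegenerate and dual nondegenerate. -/
theorem stmt9 {n m : ℕ} (C Cbar : Matrix (Fin n) (Fin n) ℝ)
    (A : Fin m → Matrix (Fin n) (Fin n) ℝ) (b : Fin m → ℝ)
    (hSA : StandingAssumptions C Cbar A b)
    (εbar : ℝ) (hεbar : εbar ∈ interior (Eset C Cbar A b))
    (Xs Ss : Matrix (Fin n) (Fin n) ℝ) (ys : Fin m → ℝ)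
    (hmc : MaxComp C Cbar A b εbar Xs ys Ss) :
    JNonsingular A Xs Ss ↔
      (Xs + Ss).PosDef ∧ PrimalNondeg A Xs ∧ DualNondeg A Ss := by
  have hXo := intrinsicInterior_subset hmc.1
  have hSo := intrinsicInterior_subset hmc.2
  have hXS := aux_comp C Cbar A b hSA εbar Xs Ss ys hXo hSo
  have hA := hSA.2.2.1
  have hX := hXo.1.2.2
  have hS : Ss.PosSemidef := hSo.1.2.2
  have hSX : Ss * Xs = 0 := by
    have := congrArg transpose hXS
    rw [transpose_mul, hXo.1.1.eq, show Ssᵀ = Ss from hSo.1.1] at this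
    simpa using this
  refine ⟨fun hJ => ?_, fun h => aux_backward A hA hX hS hXS hSX h.1 h.2.1 h.2.2⟩
  exact ⟨aux_pd A hA hX hS hJ, aux_forward A hA hX hS hJ⟩
end

section
/- Let A be a real symmetric n×n matrix, let 1 ≤ k ≤ n−1 with d := λ_{[k]}(A) − λ_{[k+1]}(A) > 0, and let Q = (Q_1, Q_2) be an orthogonal matrix whose columns are eigenvectors of A, with Q_1 ∈ ℝ^{n×k} corresponding to the k largest eigenvalues. Let Ξ be a real symmetric n×n matrix with ‖Ξ‖ ≤ d/5. Then λ_{[k]}(A+Ξ) > λ_{[k+1]}(A+Ξ), so the span W of eigenvectors corresponding to the k largest eigenvalues of A+Ξ is a well-defined k-dimensional invariant subspace of A+Ξ; moreover there exists V ∈ ℝ^{(n−k)×k} such that the columns of (Q_1 + Q_2 V)(I_k + V^T V)^{−1/2} form an orthonormal basis of W, and dist(range(Q_1), W) ≤ 4 ‖Q_1^T Ξ Q_2‖ / d. -/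
open Matrix Set

section helpers

variable {ι κ τ : Type*} [Fintype ι] [Fintype κ] [Fintype τ]

lemma frob_sq (M : Matrix ι κ ℝ) : frobNorm M ^ 2 = ∑ i, ∑ j, (M i j) ^ 2 := by
  unfold frobNorm
  exact Real.sq_sqrt (Finset.sum_nonneg fun i _ => Finset.sum_nonneg fun j _ => sq_nonneg _)

lemma frob_nonneg (M : Matrix ι κ ℝ) : 0 ≤ frobNorm M := Real.sqrt_nonneg _

lemma frob_sq_trace (M : Matrix ι κ ℝ) : frobNorm M ^ 2 = (Mᵀ * M).trace := by
  rw [frob_sq, Finset.sum_comm]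
  simp [Matrix.trace, Matrix.mul_apply, sq]

lemma frob_transpose (M : Matrix ι κ ℝ) : frobNorm Mᵀ = frobNorm M := by
  unfold frobNorm
  rw [Finset.sum_comm]; rfl

lemma frob_cs (M N : Matrix ι κ ℝ) : |(Mᵀ * N).trace| ≤ frobNorm M * frobNorm N := by
  have h : ∀ M N : Matrix ι κ ℝ, (Mᵀ * N).trace ≤ frobNorm M * frobNorm N := by
    intro M N
    have := Real.sum_mul_le_sqrt_mul_sqrt (Finset.univ : Finset (ι × κ))
      (fun p => M p.1 p.2) (fun p => N p.1 p.2)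
    simp only [Fintype.sum_prod_type] at this
    unfold frobNorm
    refine le_trans (le_of_eq ?_) this
    rw [Finset.sum_comm]
    simp [Matrix.trace, Matrix.mul_apply]
  rw [abs_le]
  constructor
  · have := h (-M) N
    have e : frobNorm (-M) = frobNorm M := by simp [frobNorm]
    rw [e] at this
    simp only [transpose_neg, Matrix.neg_mul, trace_neg] at this
    linarith
  · exact h M N

lemma frob_vecMulVec (x : ι → ℝ) : frobNorm (vecMulVec x x) = x ⬝ᵥ x := by
  have h0 : 0 ≤ x ⬝ᵥ x := Finset.sum_nonneg fun i _ => mul_self_nonneg _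
  have : (∑ i, ∑ j, (vecMulVec x x i j) ^ 2) = (x ⬝ᵥ x) ^ 2 := by
    simp only [dotProduct, sq, Finset.sum_mul_sum, vecMulVec_apply]
    refine Finset.sum_congr rfl fun i _ => Finset.sum_congr rfl fun j _ => by ring
  unfold frobNorm
  rw [this, Real.sqrt_sq h0]

lemma quad_bound (M : Matrix ι ι ℝ) (x : ι → ℝ) :
    |x ⬝ᵥ (M *ᵥ x)| ≤ frobNorm M * (x ⬝ᵥ x) := by
  have := frob_cs M (vecMulVec x x)
  rw [frob_vecMulVec] at this
  convert this using 2
  simp only [Matrix.trace, Matrix.mul_apply, dotProduct, mulVec, Matrix.diag, vecMulVec_apply,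
    transpose_apply, Finset.mul_sum]
  rw [Finset.sum_comm]
  refine Finset.sum_congr rfl fun i _ => Finset.sum_congr rfl fun j _ => by ring

lemma spec_le_frob {N : ℕ} (M : Matrix (Fin N) (Fin N) ℝ) : specNorm M ≤ frobNorm M := by
  unfold specNorm
  refine ContinuousLinearMap.opNorm_le_bound _ (frob_nonneg M) fun x => ?_
  rw [EuclideanSpace.norm_eq, EuclideanSpace.norm_eq, Real.sqrt_le_iff]
  refine ⟨mul_nonneg (frob_nonneg M) (Real.sqrt_nonneg _), ?_⟩
  rw [mul_pow, frob_sq, Real.sq_sqrt (Finset.sum_nonneg fun i _ => sq_nonneg _)]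
  rw [Finset.sum_mul]
  refine Finset.sum_le_sum fun i _ => ?_
  have := Finset.sum_mul_sq_le_sq_mul_sq Finset.univ (fun j => M i j) (fun j => x j)
  simpa [Matrix.toLpLin_apply, mulVec, dotProduct] using this

lemma dot_isom [DecidableEq κ] (Q : Matrix ι κ ℝ) (hQ : Qᵀ * Q = 1) (y : κ → ℝ) :
    (Q *ᵥ y) ⬝ᵥ (Q *ᵥ y) = y ⬝ᵥ y := by
  rw [Matrix.dotProduct_mulVec, ← Matrix.mulVec_transpose, Matrix.mulVec_mulVec, hQ,
    Matrix.one_mulVec]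

lemma quad_eig [DecidableEq κ] (A : Matrix ι ι ℝ) (Q : Matrix ι κ ℝ) (hQ : Qᵀ * Q = 1)
    (lam : κ → ℝ) (hAQ : A * Q = Q * Matrix.diagonal lam) (y : κ → ℝ) :
    (Q *ᵥ y) ⬝ᵥ (A *ᵥ (Q *ᵥ y)) = ∑ j, lam j * y j ^ 2 := by
  rw [Matrix.mulVec_mulVec, hAQ, ← Matrix.mulVec_mulVec, Matrix.dotProduct_mulVec,
    ← Matrix.mulVec_transpose, Matrix.mulVec_mulVec, hQ, Matrix.one_mulVec]
  simp only [dotProduct, mulVec_diagonal]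
  exact Finset.sum_congr rfl fun j _ => by ring

/-- Weyl's inequality. -/
lemma weyl {n : ℕ} (A B P Q : Matrix (Fin n) (Fin n) ℝ) (lam nu : Fin n → ℝ)
    (hlam : Antitone lam) (hnu : Antitone nu) (hQ : Qᵀ * Q = 1) (hP : Pᵀ * P = 1)
    (hAQ : A * Q = Q * Matrix.diagonal lam) (hBP : B * P = P * Matrix.diagonal nu) (c : ℝ)
    (hc : ∀ x : Fin n → ℝ, -(c * (x ⬝ᵥ x)) ≤ x ⬝ᵥ ((B - A) *ᵥ x)) (i : Fin n) :
    lam i - c ≤ nu i := by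
  have hPP : P * Pᵀ = 1 := mul_eq_one_comm.mp hP
  let f : (Fin n → ℝ) →ₗ[ℝ] ({j : Fin n // j ≠ i} → ℝ) :=
    LinearMap.pi fun j => if i < j.1 then LinearMap.proj j.1
      else (LinearMap.proj j.1) ∘ₗ (Pᵀ * Q).mulVecLin
  have hker : LinearMap.ker f ≠ ⊥ := by
    apply LinearMap.ker_ne_bot_of_finrank_lt
    simp only [Module.finrank_fintype_fun_eq_card, Fintype.card_fin]
    rw [Fintype.card_subtype_compl, Fintype.card_fin]
    have := i.2
    simp; omega
  obtain ⟨y, hy, hy0⟩ := Submodule.exists_mem_ne_zero_of_ne_bot hker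
  have hfy : ∀ j : Fin n, ∀ h : j ≠ i, f y ⟨j, h⟩ = 0 := by
    intro j h
    rw [LinearMap.mem_ker.mp hy]; rfl
  have hy1 : ∀ j, i < j → y j = 0 := by
    intro j h
    have := hfy j h.ne'
    simpa [f, h] using this
  set z := (Pᵀ * Q) *ᵥ y with hz
  have hz1 : ∀ j, j < i → z j = 0 := by
    intro j h
    have := hfy j h.ne
    simp only [f, LinearMap.pi_apply, if_neg h.not_gt] at this
    exact this
  have hx : P *ᵥ z = Q *ᵥ y := by
    rw [hz, Matrix.mulVec_mulVec, ← Matrix.mul_assoc, hPP, Matrix.one_mul]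
  have e1 := quad_eig A Q hQ lam hAQ y
  have e2 := quad_eig B P hP nu hBP z
  have e3 := dot_isom Q hQ y
  have e4 := dot_isom P hP z
  rw [hx] at e2 e4
  have hcx := hc (Q *ᵥ y)
  rw [Matrix.sub_mulVec, dotProduct_sub, e1, e2, e3] at hcx
  have hpos : 0 < y ⬝ᵥ y := by
    have h0 : 0 ≤ y ⬝ᵥ y := Finset.sum_nonneg fun i _ => mul_self_nonneg _
    refine lt_of_le_of_ne h0 fun h => hy0 ?_
    exact dotProduct_self_eq_zero.mp h.symm
  have b1 : lam i * (y ⬝ᵥ y) ≤ ∑ j, lam j * y j ^ 2 := by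
    simp only [dotProduct, Finset.mul_sum]
    refine Finset.sum_le_sum fun j _ => ?_
    by_cases h : i < j
    · simp [hy1 j h]
    · have := hlam (not_lt.mp h)
      nlinarith [sq_nonneg (y j)]
  have b2 : ∑ j, nu j * z j ^ 2 ≤ nu i * (z ⬝ᵥ z) := by
    simp only [dotProduct, Finset.mul_sum]
    refine Finset.sum_le_sum fun j _ => ?_
    by_cases h : j < i
    · simp [hz1 j h]
    · have := hnu (not_lt.mp h)
      nlinarith [sq_nonneg (z j)]
  have e5 : z ⬝ᵥ z = y ⬝ᵥ y := by rw [← e4, e3]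
  rw [e5] at b2
  by_contra hcon
  push Not at hcon
  nlinarith

lemma spectral_sorted {n : ℕ} (B : Matrix (Fin n) (Fin n) ℝ) (hB : B.IsSymm) :
    ∃ (ν : Fin n → ℝ) (P : Matrix (Fin n) (Fin n) ℝ),
      Antitone ν ∧ Pᵀ * P = 1 ∧ B * P = P * Matrix.diagonal ν := by
  have hH : B.IsHermitian := by
    rw [Matrix.IsHermitian, conjTranspose_eq_transpose_of_trivial]; exact hB
  let U : Matrix (Fin n) (Fin n) ℝ := hH.eigenvectorUnitary
  have hU : Uᵀ * U = 1 := by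
    have := Unitary.coe_star_mul_self hH.eigenvectorUnitary
    rwa [star_eq_conjTranspose, conjTranspose_eq_transpose_of_trivial] at this
  have hBU : B * U = U * diagonal hH.eigenvalues := by
    ext i j
    rw [mul_diagonal]
    have h := congrFun (hH.mulVec_eigenvectorBasis j) i
    rw [mul_comm]
    simpa [U, Matrix.mul_apply, mulVec, dotProduct] using h
  let σ := Tuple.sort (fun i => - hH.eigenvalues i)
  refine ⟨hH.eigenvalues ∘ σ, U.submatrix id σ, ?_, ?_, ?_⟩
  · intro a b hab
    have := Tuple.monotone_sort (fun i => - hH.eigenvalues i) hab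
    simpa [σ] using this
  · ext i j
    have := congrFun (congrFun hU (σ i)) (σ j)
    simp only [Matrix.mul_apply, transpose_apply, submatrix_apply, id, one_apply,
      σ.injective.eq_iff] at this ⊢
    exact this
  · ext i j
    have := congrFun (congrFun hBU i) (σ j)
    rw [mul_diagonal] at this ⊢
    simpa [Matrix.mul_apply] using this

/-- inverse square root of a positive definite matrix -/
lemma exists_inv_sqrt {k : ℕ} (M : Matrix (Fin k) (Fin k) ℝ) (hM : M.PosDef) :
    ∃ R : Matrix (Fin k) (Fin k) ℝ, R.PosDef ∧ R * R * M = 1 := by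
  have hs : M.IsSymm := by
    have := hM.1
    rwa [Matrix.IsHermitian, conjTranspose_eq_transpose_of_trivial] at this
  obtain ⟨μ, U, -, hU, hMU⟩ := spectral_sorted M hs
  have hUU : U * Uᵀ = 1 := mul_eq_one_comm.mp hU
  have hinj : Function.Injective U.mulVec := by
    intro a b h
    have := congrArg (fun v => Uᵀ *ᵥ v) h
    simpa [Matrix.mulVec_mulVec, hU] using this
  have hinj' : Function.Injective U.vecMul := by
    intro a b h
    have := congrArg (fun v => v ᵥ* Uᵀ) h
    simpa [Matrix.vecMul_vecMul, hUU] using this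
  have hD : Uᵀ * M * U = diagonal μ := by
    rw [Matrix.mul_assoc, hMU, ← Matrix.mul_assoc, hU, Matrix.one_mul]
  have hμ : ∀ i, 0 < μ i := by
    have := hM.conjTranspose_mul_mul_same hinj
    rw [conjTranspose_eq_transpose_of_trivial, hD] at this
    exact posDef_diagonal_iff.mp this
  have hMe : M = U * diagonal μ * Uᵀ := by
    rw [← hMU, Matrix.mul_assoc, hUU, Matrix.mul_one]
  have hpd : (diagonal fun i => (Real.sqrt (μ i))⁻¹).PosDef :=
    posDef_diagonal_iff.mpr fun i => inv_pos.mpr (Real.sqrt_pos.mpr (hμ i))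
  refine ⟨U * diagonal (fun i => (Real.sqrt (μ i))⁻¹) * Uᵀ, ?_, ?_⟩
  · have := hpd.mul_mul_conjTranspose_same hinj'
    rwa [conjTranspose_eq_transpose_of_trivial] at this
  · set D := diagonal (fun i => (Real.sqrt (μ i))⁻¹)
    have hDD : D * D * diagonal μ = 1 := by
      simp only [D, diagonal_mul_diagonal]
      rw [← diagonal_one]
      congr 1; ext i
      have := Real.mul_self_sqrt (hμ i).le
      have h0 := (Real.sqrt_pos.mpr (hμ i)).ne'
      field_simp
      nlinarith
    calc U * D * Uᵀ * (U * D * Uᵀ) * M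
        = U * D * (Uᵀ * U) * D * (Uᵀ * M) := by simp only [Matrix.mul_assoc]
      _ = U * D * D * (Uᵀ * (U * diagonal μ * Uᵀ)) := by rw [hU, Matrix.mul_one, ← hMe]
      _ = U * D * D * ((Uᵀ * U) * diagonal μ * Uᵀ) := by simp only [Matrix.mul_assoc]
      _ = U * (D * D * diagonal μ) * Uᵀ := by rw [hU, Matrix.one_mul]; simp only [Matrix.mul_assoc]
      _ = 1 := by rw [hDD, Matrix.mul_one, hUU]



lemma frob_contract_left [DecidableEq κ] [DecidableEq τ] [DecidableEq ι]
    (P1 : Matrix ι κ ℝ) (P2 : Matrix ι τ ℝ)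
    (hP : P1 * P1ᵀ + P2 * P2ᵀ = 1) {ρ : Type*} [Fintype ρ] (M : Matrix ι ρ ℝ) :
    frobNorm (P1ᵀ * M) ^ 2 + frobNorm (P2ᵀ * M) ^ 2 = frobNorm M ^ 2 := by
  rw [frob_sq_trace, frob_sq_trace, frob_sq_trace, ← Matrix.trace_add]
  congr 1
  calc (P1ᵀ * M)ᵀ * (P1ᵀ * M) + (P2ᵀ * M)ᵀ * (P2ᵀ * M)
      = Mᵀ * ((P1 * P1ᵀ + P2 * P2ᵀ) * M) := by
        simp only [transpose_mul, transpose_transpose, Matrix.add_mul, Matrix.mul_add,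
          Matrix.mul_assoc]
    _ = Mᵀ * M := by rw [hP, Matrix.one_mul]

lemma frob_isom [DecidableEq κ] (Q : Matrix ι κ ℝ) (hQ : Qᵀ * Q = 1) (M : Matrix κ τ ℝ) :
    frobNorm (Q * M) ^ 2 = frobNorm M ^ 2 := by
  rw [frob_sq_trace, frob_sq_trace, transpose_mul, Matrix.mul_assoc, ← Matrix.mul_assoc Qᵀ, hQ,
    Matrix.one_mul]

/-- The `sin θ` bound. -/
lemma core_bound [DecidableEq κ] [DecidableEq τ] [DecidableEq ι]
    (A Xi : Matrix ι ι ℝ) (hA : A.IsSymm) (hXi : Xi.IsSymm)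
    (Q1 P1 : Matrix ι κ ℝ) (Q2 P2 : Matrix ι τ ℝ)
    (hQ1 : Q1ᵀ * Q1 = 1) (hQ2 : Q2ᵀ * Q2 = 1)
    (hQ : Q1 * Q1ᵀ + Q2 * Q2ᵀ = 1) (hP : P1 * P1ᵀ + P2 * P2ᵀ = 1)
    (l1 : κ → ℝ) (n2 : τ → ℝ) (hAQ : A * Q1 = Q1 * diagonal l1)
    (hBP : (A + Xi) * P2 = P2 * diagonal n2) (a b c : ℝ) (hc : frobNorm Xi ≤ c)
    (hl : ∀ j, a ≤ l1 j) (hn : ∀ i, n2 i ≤ b) :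
    (a - b - c) * frobNorm (P2ᵀ * Q1) ≤ frobNorm (Q1ᵀ * Xi * Q2) := by
  set S := P2ᵀ * Q1 with hS
  set E := Q2ᵀ * Xi * Q1 with hE
  have hEn : frobNorm (Q1ᵀ * Xi * Q2) = frobNorm E := by
    rw [← frob_transpose E, hE]
    simp only [transpose_mul, transpose_transpose, hXi.eq, Matrix.mul_assoc]
  have hB : (A + Xi)ᵀ = A + Xi := by rw [transpose_add, hA.eq, hXi.eq]
  have hPB : P2ᵀ * (A + Xi) = diagonal n2 * P2ᵀ := by
    have := congrArg transpose hBP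
    rwa [transpose_mul, transpose_mul, hB, diagonal_transpose] at this
  have hXQ : Xi * Q1 = Q1 * (Q1ᵀ * Xi * Q1) + Q2 * E := by
    calc Xi * Q1 = (Q1 * Q1ᵀ + Q2 * Q2ᵀ) * (Xi * Q1) := by rw [hQ, Matrix.one_mul]
      _ = _ := by simp only [hE, Matrix.add_mul, Matrix.mul_assoc]
  have key : diagonal n2 * S = S * diagonal l1 + S * (Q1ᵀ * Xi * Q1) + P2ᵀ * (Q2 * E) := by
    calc diagonal n2 * S = P2ᵀ * (A * Q1 + Xi * Q1) := by
          rw [hS, ← Matrix.mul_assoc, ← hPB, Matrix.mul_assoc, Matrix.add_mul]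
      _ = _ := by
          rw [hAQ, hXQ, hS]; simp only [Matrix.mul_add, Matrix.mul_assoc, add_assoc]
  have key2 := congrArg (fun X => (Sᵀ * X).trace) key
  simp only [Matrix.mul_add, Matrix.trace_add] at key2
  have t1 : (Sᵀ * (diagonal n2 * S)).trace ≤ b * frobNorm S ^ 2 := by
    rw [frob_sq, Finset.sum_comm, Finset.mul_sum]
    simp only [Matrix.trace, Matrix.diag]
    refine Finset.sum_le_sum fun j _ => ?_
    rw [Finset.mul_sum, Matrix.mul_apply]
    refine Finset.sum_le_sum fun i _ => ?_
    rw [diagonal_mul, transpose_apply]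
    have := hn i
    nlinarith [sq_nonneg (S i j)]
  have t2 : a * frobNorm S ^ 2 ≤ (Sᵀ * (S * diagonal l1)).trace := by
    rw [frob_sq, Finset.sum_comm, Finset.mul_sum]
    simp only [Matrix.trace, Matrix.diag]
    refine Finset.sum_le_sum fun j _ => ?_
    rw [Finset.mul_sum, Matrix.mul_apply]
    refine Finset.sum_le_sum fun i _ => ?_
    rw [mul_diagonal, transpose_apply]
    have := hl j
    nlinarith [sq_nonneg (S i j)]
  have t3 : -(c * frobNorm S ^ 2) ≤ (Sᵀ * (S * (Q1ᵀ * Xi * Q1))).trace := by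
    have e : (Sᵀ * (S * (Q1ᵀ * Xi * Q1))).trace
        = ∑ i, (Q1 *ᵥ S i) ⬝ᵥ (Xi *ᵥ (Q1 *ᵥ S i)) := by
      have h : ∀ i, (Q1 *ᵥ S i) ⬝ᵥ (Xi *ᵥ (Q1 *ᵥ S i)) = S i ⬝ᵥ ((Q1ᵀ * Xi * Q1) *ᵥ S i) := by
        intro i
        rw [dotProduct_comm, Matrix.dotProduct_mulVec, ← Matrix.mulVec_transpose, dotProduct_comm]
        simp only [Matrix.mulVec_mulVec, Matrix.mul_assoc]
      simp only [h]
      rw [Matrix.trace_mul_comm, Matrix.mul_assoc]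
      simp only [Matrix.trace, Matrix.diag]
      rfl
    rw [e, frob_sq, Finset.mul_sum, ← Finset.sum_neg_distrib]
    refine Finset.sum_le_sum fun i _ => ?_
    have h1 := (abs_le.mp (quad_bound Xi (Q1 *ᵥ S i))).1
    rw [dot_isom Q1 hQ1] at h1
    have h2 : S i ⬝ᵥ S i = ∑ j, S i j ^ 2 := by simp [dotProduct, sq]
    have h3 : 0 ≤ ∑ j, S i j ^ 2 := Finset.sum_nonneg fun j _ => sq_nonneg _
    rw [h2] at h1
    nlinarith
  have t4 : -(frobNorm S * frobNorm E) ≤ (Sᵀ * (P2ᵀ * (Q2 * E))).trace := by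
    have h1 := (abs_le.mp (frob_cs S (P2ᵀ * (Q2 * E)))).1
    have h2 : frobNorm (P2ᵀ * (Q2 * E)) ≤ frobNorm E := by
      have h3 := frob_contract_left P1 P2 hP (Q2 * E)
      rw [frob_isom Q2 hQ2] at h3
      apply le_of_sq_le_sq _ (frob_nonneg E)
      nlinarith [sq_nonneg (frobNorm (P1ᵀ * (Q2 * E)))]
    nlinarith [frob_nonneg S]
  rw [hEn]
  rcases (frob_nonneg S).eq_or_lt with h | h
  · rw [← h, mul_zero]; exact frob_nonneg E
  · nlinarith

lemma range_le_of [DecidableEq κ] [DecidableEq τ] [DecidableEq ι]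
    (B : Matrix ι ι ℝ) (hB : B.IsSymm) (P1 P1' : Matrix ι κ ℝ) (P2' : Matrix ι τ ℝ)
    (hP : P1' * P1'ᵀ + P2' * P2'ᵀ = 1) (n1 : κ → ℝ) (n2 : τ → ℝ)
    (h1 : B * P1 = P1 * diagonal n1) (h2 : B * P2' = P2' * diagonal n2)
    (hlt : ∀ i j, n2 i < n1 j) :
    LinearMap.range P1.mulVecLin ≤ LinearMap.range P1'.mulVecLin := by
  have hPB : P2'ᵀ * B = diagonal n2 * P2'ᵀ := by
    have := congrArg transpose h2
    rwa [transpose_mul, transpose_mul, hB.eq, diagonal_transpose] at this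
  have hz : P2'ᵀ * P1 = 0 := by
    have h : diagonal n2 * (P2'ᵀ * P1) = (P2'ᵀ * P1) * diagonal n1 := by
      rw [← Matrix.mul_assoc, ← hPB, Matrix.mul_assoc, h1, Matrix.mul_assoc]
    ext i j
    have := congrFun (congrFun h i) j
    rw [diagonal_mul, mul_diagonal] at this
    have h3 : (n1 j - n2 i) * (P2'ᵀ * P1) i j = 0 := by linarith
    rcases mul_eq_zero.mp h3 with h4 | h4
    · have := hlt i j; linarith
    · exact h4
  have : P1 = P1' * (P1'ᵀ * P1) := by
    calc P1 = (P1' * P1'ᵀ + P2' * P2'ᵀ) * P1 := by rw [hP, Matrix.one_mul]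
      _ = _ := by rw [Matrix.add_mul, Matrix.mul_assoc, Matrix.mul_assoc, hz]; simp
  rw [this, Matrix.mulVecLin_mul]
  exact LinearMap.range_comp_le_range _ _

lemma proj_diff [DecidableEq κ] [DecidableEq τ] [DecidableEq ι]
    (Q1 P1 : Matrix ι κ ℝ) (P2 : Matrix ι τ ℝ)
    (hQ1 : Q1ᵀ * Q1 = 1) (hP1 : P1ᵀ * P1 = 1) (hP : P1 * P1ᵀ + P2 * P2ᵀ = 1) :
    frobNorm (Q1 * Q1ᵀ - P1 * P1ᵀ) ^ 2 = 2 * frobNorm (P2ᵀ * Q1) ^ 2 := by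
  have h := frob_contract_left P1 P2 hP Q1
  have hq : frobNorm Q1 ^ 2 = (1 : Matrix κ κ ℝ).trace := by rw [frob_sq_trace, hQ1]
  have hc : (Q1 * Q1ᵀ * (P1 * P1ᵀ)).trace = frobNorm (P1ᵀ * Q1) ^ 2 := by
    rw [frob_sq_trace, transpose_mul, transpose_transpose]
    calc (Q1 * Q1ᵀ * (P1 * P1ᵀ)).trace = (Q1 * (Q1ᵀ * P1 * P1ᵀ)).trace := by
          simp only [Matrix.mul_assoc]
      _ = _ := by rw [Matrix.trace_mul_comm]; simp only [Matrix.mul_assoc]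
  have hq2 : (Q1 * Q1ᵀ * (Q1 * Q1ᵀ)).trace = (1 : Matrix κ κ ℝ).trace := by
    rw [Matrix.mul_assoc, ← Matrix.mul_assoc Q1ᵀ, hQ1, Matrix.one_mul, Matrix.trace_mul_comm, hQ1]
  have hp2 : (P1 * P1ᵀ * (P1 * P1ᵀ)).trace = (1 : Matrix κ κ ℝ).trace := by
    rw [Matrix.mul_assoc, ← Matrix.mul_assoc P1ᵀ, hP1, Matrix.one_mul, Matrix.trace_mul_comm, hP1]
  have hc' : (P1 * P1ᵀ * (Q1 * Q1ᵀ)).trace = frobNorm (P1ᵀ * Q1) ^ 2 := by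
    rw [Matrix.trace_mul_comm, hc]
  rw [frob_sq_trace (Q1 * Q1ᵀ - P1 * P1ᵀ)]
  simp only [transpose_sub, transpose_mul, transpose_transpose, Matrix.sub_mul, Matrix.mul_sub,
    Matrix.trace_sub, hc, hc', hq2, hp2]
  linarith

lemma split_orth {n k : ℕ} (hk2 : k < n) (Q : Matrix (Fin n) (Fin n) ℝ) (hQ : Qᵀ * Q = 1)
    (g : Fin (n - k) → Fin n) (hg : ∀ j, (g j : ℕ) = k + (j : ℕ))
    (Q1 : Matrix (Fin n) (Fin k) ℝ) (Q2 : Matrix (Fin n) (Fin (n - k)) ℝ)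
    (h1 : Q1 = Q.submatrix id (Fin.castLE hk2.le))
    (h2 : Q2 = Q.submatrix id g) :
    Q1ᵀ * Q1 = 1 ∧ Q2ᵀ * Q2 = 1 ∧ Q2ᵀ * Q1 = 0 ∧ Q1 * Q1ᵀ + Q2 * Q2ᵀ = 1 := by
  have hQQ : Q * Qᵀ = 1 := mul_eq_one_comm.mp hQ
  have ent : ∀ i j, ∑ x, Q x i * Q x j = if i = j then 1 else 0 := by
    intro i j
    have := congrFun (congrFun hQ i) j
    simpa [Matrix.mul_apply, one_apply] using this
  subst h1 h2
  refine ⟨?_, ?_, ?_, ?_⟩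
  · ext i j
    simp only [Matrix.mul_apply, transpose_apply, submatrix_apply, id, ent, one_apply]
    simp
  · ext i j
    simp only [Matrix.mul_apply, transpose_apply, submatrix_apply, id, ent, one_apply]
    simp [Fin.ext_iff, hg]
  · ext i j
    simp only [Matrix.mul_apply, transpose_apply, submatrix_apply, id, ent, Matrix.zero_apply]
    rw [if_neg]
    intro h
    have := congrArg Fin.val h
    simp [hg] at this
    omega
  · let e : Fin k ⊕ Fin (n - k) ≃ Fin n := finSumFinEquiv.trans (finCongr (by omega))
    rw [← hQQ]
    ext i j
    simp only [Matrix.add_apply, Matrix.mul_apply, transpose_apply, submatrix_apply, id]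
    rw [← Equiv.sum_comp e, Fintype.sum_sum_type]
    have he : ∀ j, g j = e (Sum.inr j) := fun j => by
      rw [Fin.ext_iff, hg]; rfl
    simp only [he]
    rfl

lemma cols_eig {n : ℕ} {α : Type*} [Fintype α] [DecidableEq α] (B P : Matrix (Fin n) (Fin n) ℝ)
    (ν : Fin n → ℝ) (h : B * P = P * diagonal ν) (g : α → Fin n) :
    B * P.submatrix id g = P.submatrix id g * diagonal (ν ∘ g) := by
  ext i j
  have := congrFun (congrFun h i) (g j)
  rw [mul_diagonal] at this ⊢
  simpa [Matrix.mul_apply] using this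

lemma mulVec_sq_le (M : Matrix ι κ ℝ) (x : κ → ℝ) :
    (M *ᵥ x) ⬝ᵥ (M *ᵥ x) ≤ frobNorm M ^ 2 * (x ⬝ᵥ x) := by
  rw [frob_sq, Finset.sum_mul]
  simp only [dotProduct]
  refine Finset.sum_le_sum fun i _ => ?_
  have := Finset.sum_mul_sq_le_sq_mul_sq Finset.univ (fun j => M i j) (fun j => x j)
  simpa [mulVec, dotProduct, ← sq] using this

lemma dot_split [DecidableEq ι] (P1 : Matrix ι κ ℝ) (P2 : Matrix ι τ ℝ)
    (hP : P1 * P1ᵀ + P2 * P2ᵀ = 1) (w : ι → ℝ) :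
    (P1ᵀ *ᵥ w) ⬝ᵥ (P1ᵀ *ᵥ w) + (P2ᵀ *ᵥ w) ⬝ᵥ (P2ᵀ *ᵥ w) = w ⬝ᵥ w := by
  rw [Matrix.dotProduct_mulVec, Matrix.dotProduct_mulVec, Matrix.vecMul_transpose,
    Matrix.vecMul_transpose, Matrix.mulVec_mulVec, Matrix.mulVec_mulVec, ← add_dotProduct,
    ← Matrix.add_mulVec, hP, Matrix.one_mulVec]

lemma range_mul_unit [DecidableEq κ] (P : Matrix ι κ ℝ) (U U' : Matrix κ κ ℝ) (h : U * U' = 1) :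
    LinearMap.range (P * U).mulVecLin = LinearMap.range P.mulVecLin := by
  apply le_antisymm
  · rw [Matrix.mulVecLin_mul]; exact LinearMap.range_comp_le_range _ _
  · have : P = (P * U) * U' := by rw [Matrix.mul_assoc, h, Matrix.mul_one]
    conv_lhs => rw [this, Matrix.mulVecLin_mul]
    exact LinearMap.range_comp_le_range _ _

/-- The graph representation of the perturbed subspace. -/
lemma graph_rep [DecidableEq τ] [DecidableEq ι] {k : ℕ}
    (Q1 P1 : Matrix ι (Fin k) ℝ) (Q2 P2 : Matrix ι τ ℝ)
    (hQ1 : Q1ᵀ * Q1 = 1) (hQ2 : Q2ᵀ * Q2 = 1) (hQ21 : Q2ᵀ * Q1 = 0)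
    (hQ : Q1 * Q1ᵀ + Q2 * Q2ᵀ = 1) (hP : P1 * P1ᵀ + P2 * P2ᵀ = 1)
    (hS : frobNorm (P2ᵀ * Q1) ^ 2 < 1) :
    ∃ (V : Matrix τ (Fin k) ℝ) (R : Matrix (Fin k) (Fin k) ℝ),
      R.PosDef ∧ R * R * (1 + Vᵀ * V) = 1 ∧
      ((Q1 + Q2 * V) * R)ᵀ * ((Q1 + Q2 * V) * R) = 1 ∧
      LinearMap.range ((Q1 + Q2 * V) * R).mulVecLin = LinearMap.range P1.mulVecLin := by
  set T := Q1ᵀ * P1 with hT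
  have hdet' : (P1ᵀ * Q1).det ≠ 0 := by
    intro h0
    obtain ⟨x, hx0, hx⟩ := Matrix.exists_mulVec_eq_zero_iff.mpr h0
    apply hx0
    have h1 := dot_split P1 P2 hP (Q1 *ᵥ x)
    rw [dot_isom Q1 hQ1, Matrix.mulVec_mulVec, Matrix.mulVec_mulVec, hx] at h1
    have h2 := mulVec_sq_le (P2ᵀ * Q1) x
    have h3 : 0 ≤ x ⬝ᵥ x := Finset.sum_nonneg fun i _ => mul_self_nonneg _
    rw [zero_dotProduct, zero_add] at h1
    apply dotProduct_self_eq_zero.mp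
    nlinarith
  have hTT : P1ᵀ * Q1 = Tᵀ := by rw [hT, transpose_mul, transpose_transpose]
  have hdet : IsUnit T.det := by
    rw [hTT, det_transpose] at hdet'
    exact isUnit_iff_ne_zero.mpr hdet'
  have hTi : T * T⁻¹ = 1 := Matrix.mul_nonsing_inv _ hdet
  have hiT : T⁻¹ * T = 1 := Matrix.nonsing_inv_mul _ hdet
  have hQ12 : Q1ᵀ * Q2 = 0 := by
    have := congrArg transpose hQ21
    simpa [transpose_mul] using this
  let V := Q2ᵀ * P1 * T⁻¹
  have hF : Q1 + Q2 * V = P1 * T⁻¹ := by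
    calc Q1 + Q2 * V = Q1 * (T * T⁻¹) + Q2 * V := by rw [hTi, Matrix.mul_one]
      _ = (Q1 * Q1ᵀ + Q2 * Q2ᵀ) * (P1 * T⁻¹) := by
        simp only [V, hT, Matrix.add_mul, Matrix.mul_assoc]
      _ = P1 * T⁻¹ := by rw [hQ, Matrix.one_mul]
  have hM : (1 + Vᵀ * V).PosDef := by
    have := Matrix.posSemidef_conjTranspose_mul_self V
    rw [conjTranspose_eq_transpose_of_trivial] at this
    exact Matrix.PosDef.one.add_posSemidef this
  obtain ⟨R, hR, hRM⟩ := exists_inv_sqrt _ hM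
  have hRs : Rᵀ = R := by
    have := hR.1
    rwa [Matrix.IsHermitian, conjTranspose_eq_transpose_of_trivial] at this
  have hFF : (Q1 + Q2 * V)ᵀ * (Q1 + Q2 * V) = 1 + Vᵀ * V := by
    calc (Q1 + Q2 * V)ᵀ * (Q1 + Q2 * V)
        = Q1ᵀ * Q1 + (Q1ᵀ * Q2) * V + Vᵀ * (Q2ᵀ * Q1) + Vᵀ * (Q2ᵀ * Q2) * V := by
          simp only [transpose_add, transpose_mul, Matrix.add_mul, Matrix.mul_add,
            Matrix.mul_assoc]
          abel
      _ = _ := by rw [hQ1, hQ2, hQ12, hQ21]; simp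
  refine ⟨V, R, hR, hRM, ?_, ?_⟩
  · have h1 : R * (1 + Vᵀ * V) * R = 1 := by
      rw [Matrix.mul_assoc] at hRM
      exact mul_eq_one_comm.mp hRM
    rw [transpose_mul, hRs, Matrix.mul_assoc, ← Matrix.mul_assoc _ _ R, hFF, ← Matrix.mul_assoc, h1]
  · rw [hF, Matrix.mul_assoc]
    apply range_mul_unit P1 (T⁻¹ * R) (R * (1 + Vᵀ * V) * T)
    calc T⁻¹ * R * (R * (1 + Vᵀ * V) * T) = T⁻¹ * (R * R * (1 + Vᵀ * V)) * T := by
          simp only [Matrix.mul_assoc]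
      _ = 1 := by rw [hRM, Matrix.mul_one, hiT]

end helpers

/-- perturbation of the invariant subspace spanned by the eigenvectors of the
`k` largest eigenvalues of a symmetric matrix (Stewart / Golub–Van Loan). -/
theorem stmt10 {n : ℕ} (A Xi : Matrix (Fin n) (Fin n) ℝ)
    (hA : A.IsSymm) (hXi : Xi.IsSymm)
    (k : ℕ) (hk1 : 1 ≤ k) (hk2 : k < n)
    (lam : Fin n → ℝ) (hlam : Antitone lam)
    (Q : Matrix (Fin n) (Fin n) ℝ) (hQ : Qᵀ * Q = 1)
    (hAQ : A * Q = Q * Matrix.diagonal lam)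
    (d : ℝ) (hd : d = lam ⟨k - 1, by omega⟩ - lam ⟨k, hk2⟩) (hdpos : 0 < d)
    (hXismall : frobNorm Xi ≤ d / 5) :
    ∃ (ν : Fin n → ℝ) (P : Matrix (Fin n) (Fin n) ℝ),
      Antitone ν ∧ Pᵀ * P = 1 ∧ (A + Xi) * P = P * Matrix.diagonal ν ∧
      -- the gap persists: `λ_[k](A+Ξ) > λ_[k+1](A+Ξ)`
      ν ⟨k, hk2⟩ < ν ⟨k - 1, by omega⟩ ∧
      -- the invariant subspace `W` spanned by the eigenvectors of the `k` largest
      -- eigenvalues of `A + Ξ` is well defined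
      (∀ (ν' : Fin n → ℝ) (P' : Matrix (Fin n) (Fin n) ℝ), Antitone ν' → P'ᵀ * P' = 1 →
        (A + Xi) * P' = P' * Matrix.diagonal ν' →
        LinearMap.range (P'.submatrix id (Fin.castLE hk2.le)).mulVecLin =
          LinearMap.range (P.submatrix id (Fin.castLE hk2.le)).mulVecLin) ∧
      ∃ (V : Matrix (Fin (n - k)) (Fin k) ℝ) (R : Matrix (Fin k) (Fin k) ℝ),
        R.PosDef ∧
        R * R * (1 + Vᵀ * V) = 1 ∧
        (let Q₁ := Q.submatrix id (Fin.castLE hk2.le);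
         let Q₂ := Q.submatrix id (fun j : Fin (n - k) =>
           (⟨k + (j : ℕ), by have := j.2; omega⟩ : Fin n));
         let P₁ := P.submatrix id (Fin.castLE hk2.le);
         let G := (Q₁ + Q₂ * V) * R;
         Gᵀ * G = 1 ∧ LinearMap.range G.mulVecLin = LinearMap.range P₁.mulVecLin ∧
           specNorm (Q₁ * Q₁ᵀ - P₁ * P₁ᵀ) ≤ 4 * frobNorm (Q₁ᵀ * Xi * Q₂) / d) := by
  have hBs : (A + Xi).IsSymm := hA.add hXi
  obtain ⟨ν, P, hν, hP, hBP⟩ := spectral_sorted (A + Xi) hBs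
  have hX0 := frob_nonneg Xi
  have w1 : ∀ i, lam i - d / 5 ≤ ν i := by
    refine weyl A (A + Xi) P Q lam ν hlam hν hQ hP hAQ hBP (d / 5) fun x => ?_
    rw [add_sub_cancel_left]
    have h1 := (abs_le.mp (quad_bound Xi x)).1
    have h3 : 0 ≤ x ⬝ᵥ x := Finset.sum_nonneg fun i _ => mul_self_nonneg _
    nlinarith
  have w2 : ∀ i, ν i - d / 5 ≤ lam i := by
    refine weyl (A + Xi) A Q P ν lam hν hlam hP hQ hBP hAQ (d / 5) fun x => ?_
    rw [sub_add_cancel_left, Matrix.neg_mulVec, dotProduct_neg]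
    have h1 := (abs_le.mp (quad_bound Xi x)).2
    have h3 : 0 ≤ x ⬝ᵥ x := Finset.sum_nonneg fun i _ => mul_self_nonneg _
    nlinarith
  have hgap : ν ⟨k, hk2⟩ < ν ⟨k - 1, by omega⟩ := by
    have h1 := w1 ⟨k - 1, by omega⟩
    have h2 := w2 ⟨k, hk2⟩
    linarith
  -- positions of the two blocks
  have hlo : ∀ j : Fin k, Fin.castLE hk2.le j ≤ (⟨k - 1, by omega⟩ : Fin n) := by
    intro j
    rw [Fin.le_def]
    have := j.2
    simp; omega
  have hhi : ∀ j : Fin (n - k), (⟨k, hk2⟩ : Fin n) ≤ ⟨k + (j : ℕ), by have := j.2; omega⟩ := by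
    intro j
    rw [Fin.le_def]
    simp
  obtain ⟨hP1, hP2, hP21, hPs⟩ := split_orth hk2 P hP
      (fun j : Fin (n - k) => (⟨k + (j : ℕ), by have := j.2; omega⟩ : Fin n)) (fun _ => rfl) _ _ rfl rfl
  obtain ⟨hQ1, hQ2, hQ21, hQs⟩ := split_orth hk2 Q hQ
      (fun j : Fin (n - k) => (⟨k + (j : ℕ), by have := j.2; omega⟩ : Fin n)) (fun _ => rfl) _ _ rfl rfl
  have hBP1 := cols_eig (A + Xi) P ν hBP (Fin.castLE hk2.le)
  have hBP2 := cols_eig (A + Xi) P ν hBP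
    (fun j : Fin (n - k) => (⟨k + (j : ℕ), by have := j.2; omega⟩ : Fin n))
  have hAQ1 := cols_eig A Q lam hAQ (Fin.castLE hk2.le)
  refine ⟨ν, P, hν, hP, hBP, hgap, ?_, ?_⟩
  · intro ν' P' hν' hP' hBP'
    have h0 : ∀ x : Fin n → ℝ,
        -(0 * (x ⬝ᵥ x)) ≤ x ⬝ᵥ (((A + Xi) - (A + Xi)) *ᵥ x) := by
      intro x; simp
    have u1 := weyl _ _ P P' ν' ν hν' hν hP' hP hBP' hBP 0 h0
    have u2 := weyl _ _ P' P ν ν' hν hν' hP hP' hBP hBP' 0 h0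
    have hνν : ν' = ν := by
      ext i
      have h1 := u1 i
      have h2 := u2 i
      linarith
    subst hνν
    obtain ⟨-, -, -, hPs'⟩ := split_orth hk2 P' hP'
      (fun j : Fin (n - k) => (⟨k + (j : ℕ), by have := j.2; omega⟩ : Fin n)) (fun _ => rfl) _ _ rfl rfl
    have hBP1' := cols_eig (A + Xi) P' ν' hBP' (Fin.castLE hk2.le)
    have hBP2' := cols_eig (A + Xi) P' ν' hBP'
      (fun j : Fin (n - k) => (⟨k + (j : ℕ), by have := j.2; omega⟩ : Fin n))
    have hlt : ∀ (i : Fin (n - k)) (j : Fin k),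
        (ν' ∘ (fun j : Fin (n - k) => (⟨k + (j : ℕ), by have := j.2; omega⟩ : Fin n))) i
          < (ν' ∘ Fin.castLE hk2.le) j := fun i j =>
      lt_of_le_of_lt (hν (hhi i)) (lt_of_lt_of_le hgap (hν (hlo j)))
    exact le_antisymm (range_le_of _ hBs _ _ _ hPs _ _ hBP1' hBP2 hlt)
      (range_le_of _ hBs _ _ _ hPs' _ _ hBP1 hBP2' hlt)
  · have hcore := core_bound A Xi hA hXi _ _ _ _ hQ1 hQ2 hQs hPs _ _ hAQ1 hBP2
      (lam ⟨k - 1, by omega⟩) (lam ⟨k, hk2⟩ + d / 5) (d / 5) hXismall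
      (fun j => hlam (hlo j)) (fun i => by
        have h1 := hν (hhi i)
        have h2 := w2 ⟨k, hk2⟩
        simp only [Function.comp]
        linarith)
    have hpd := proj_diff _ _ _ hQ1 hP1 hPs
    generalize Q.submatrix id (Fin.castLE hk2.le) = Q1 at *
    generalize Q.submatrix id (fun j : Fin (n - k) =>
           (⟨k + (j : ℕ), by have := j.2; omega⟩ : Fin n)) = Q2 at *
    generalize P.submatrix id (Fin.castLE hk2.le) = P1 at *
    generalize P.submatrix id (fun j : Fin (n - k) =>
           (⟨k + (j : ℕ), by have := j.2; omega⟩ : Fin n)) = P2 at *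
    have hE : frobNorm (Q1ᵀ * Xi * Q2) ≤ d / 5 := by
      have h1 := frob_contract_left Q1 Q2 hQs (Xi * Q2)
      have h2 := frob_contract_left Q1 Q2 hQs Xi
      have h3 : frobNorm (Xi * Q2) = frobNorm (Q2ᵀ * Xi) := by
        rw [← frob_transpose, transpose_mul, hXi.eq]
      rw [h3, ← Matrix.mul_assoc] at h1
      refine le_trans (le_of_sq_le_sq ?_ hX0) hXismall
      nlinarith [sq_nonneg (frobNorm (Q2ᵀ * (Xi * Q2))), sq_nonneg (frobNorm (Q1ᵀ * Xi))]
    have hS0 := frob_nonneg (P2ᵀ * Q1)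
    have hcore' : 3 * d / 5 * frobNorm (P2ᵀ * Q1) ≤ frobNorm (Q1ᵀ * Xi * Q2) := by
      refine le_trans (le_of_eq ?_) hcore
      rw [hd]; ring
    have hS1 : frobNorm (P2ᵀ * Q1) ≤ 1 / 3 := by
      by_contra hcon
      push Not at hcon
      nlinarith
    obtain ⟨V, R, hR, hRM, hG, hGr⟩ := graph_rep Q1 P1 Q2 P2 hQ1 hQ2 hQ21 hQs hPs (by nlinarith)
    refine ⟨V, R, hR, hRM, hG, hGr, ?_⟩
    refine le_trans (spec_le_frob _) ?_
    have h1 : frobNorm (Q1 * Q1ᵀ - P1 * P1ᵀ) ≤ 2 * frobNorm (P2ᵀ * Q1) := by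
      apply le_of_sq_le_sq _ (by linarith)
      nlinarith
    refine le_trans h1 ?_
    rw [le_div_iff₀ hdpos]
    have := frob_nonneg (Q1ᵀ * Xi * Q2)
    nlinarith
end

section
/- If |ε| < min{ δ^μ / (2 θ^μ ‖C̄‖), 1 / (2 (θ^μ)² ‖C̄‖) }, then there exists a central solution (X^μ(ε), y^μ(ε), S^μ(ε)) of the perturbed problems (P_ε) and (D_ε) with the same parameter μ such that ‖X^μ(ε) − X^μ‖ ≤ (1 − sqrt(1 − 2|ε| (θ^μ)² ‖C̄‖)) / θ^μ and ‖S^μ(ε) − S^μ‖ ≤ (1 − sqrt(1 − 2|ε| (θ^μ)² ‖C̄‖)) / θ^μ. -/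
open Matrix Set

noncomputable section

variable {n m : ℕ}

namespace Aux11

/-- Kantorovich-type existence result for quadratic equations, along a segment of data. -/
theorem kant {E : Type*} [NormedAddCommGroup E] [NormedSpace ℝ E] [CompleteSpace E]
    (G : E ≃ₗ[ℝ] E) (Q : E → E) (θ : ℝ) (hθ : 0 < θ)
    (hG : ∀ x, ‖x‖ ≤ θ * ‖G x‖) (hQ0 : Q 0 = 0)
    (hQ : ∀ x y, ‖Q x - Q y‖ ≤ 1 / 2 * (‖x‖ + ‖y‖) * ‖x - y‖)
    (g : E) (hg : 2 * θ ^ 2 * ‖g‖ < 1) :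
    ∃ x : ℝ → E, ContinuousOn x (Icc 0 1) ∧ x 0 = 0 ∧ ∀ t ∈ Icc (0 : ℝ) 1,
      ‖x t‖ ≤ (1 - Real.sqrt (1 - 2 * θ ^ 2 * ‖g‖)) / θ ∧ G (x t) + Q (x t) = t • g := by
  set s := Real.sqrt (1 - 2 * θ ^ 2 * ‖g‖) with hs
  set r := (1 - s) / θ with hr
  have hs0 : 0 < s := Real.sqrt_pos.2 (by linarith)
  have hs2 : s ^ 2 = 1 - 2 * θ ^ 2 * ‖g‖ := Real.sq_sqrt (by linarith)
  have hs1 : s ≤ 1 := by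
    have : 0 ≤ 2 * θ ^ 2 * ‖g‖ := by positivity
    nlinarith
  have hrθ : θ * r = 1 - s := by rw [hr]; field_simp
  have hr0 : 0 ≤ r := div_nonneg (by linarith) hθ.le
  have hreq : θ * (‖g‖ + r ^ 2 / 2) = r := by
    have h1 : θ * (θ * (‖g‖ + r ^ 2 / 2)) = θ * r := by
      have : (θ * r) ^ 2 = (1 - s) ^ 2 := by rw [hrθ]
      nlinarith
    exact mul_left_cancel₀ hθ.ne' h1
  have hGs : ∀ x, ‖G.symm x‖ ≤ θ * ‖x‖ := fun x => by simpa using hG (G.symm x)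
  have hQn : ∀ x, ‖x‖ ≤ r → ‖Q x‖ ≤ r ^ 2 / 2 := fun x hx => by
    have := hQ x 0
    simp only [hQ0, sub_zero, norm_zero, add_zero] at this
    nlinarith [norm_nonneg x]
  have hQr : ∀ x y, ‖x‖ ≤ r → ‖y‖ ≤ r → ‖Q x - Q y‖ ≤ r * ‖x - y‖ := fun x y hx hy => by
    refine (hQ x y).trans ?_
    gcongr
    linarith
  -- existence
  have hex : ∀ t : ℝ, ∃ x : E, t ∈ Icc (0 : ℝ) 1 → ‖x‖ ≤ r ∧ G x + Q x = t • g := by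
    intro t
    by_cases ht : t ∈ Icc (0 : ℝ) 1
    swap
    · exact ⟨0, fun h => absurd h ht⟩
    let T : E → E := fun x => G.symm (t • g - Q x)
    have hmaps : MapsTo T (Metric.closedBall 0 r) (Metric.closedBall 0 r) := by
      intro x hx
      rw [mem_closedBall_zero_iff] at hx ⊢
      calc ‖T x‖ ≤ θ * ‖t • g - Q x‖ := hGs _
        _ ≤ θ * (‖g‖ + r ^ 2 / 2) := by
            gcongr
            refine (norm_sub_le _ _).trans (add_le_add ?_ (hQn x hx))
            rw [norm_smul, Real.norm_of_nonneg ht.1]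
            exact mul_le_of_le_one_left (norm_nonneg _) ht.2
        _ = r := hreq
    have hcon : ContractingWith (Real.toNNReal (1 - s)) (hmaps.restrict T _ _) := by
      refine ⟨?_, ?_⟩
      · rw [Real.toNNReal_lt_one]; linarith
      · refine LipschitzWith.of_dist_le_mul ?_
        rintro ⟨x, hx⟩ ⟨y, hy⟩
        rw [mem_closedBall_zero_iff] at hx hy
        rw [Real.coe_toNNReal _ (by linarith)]
        simp only [Subtype.dist_eq, MapsTo.val_restrict_apply, dist_eq_norm]
        have : T x - T y = G.symm (Q y - Q x) := by
          simp only [T, ← map_sub]; congr 1; abel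
        rw [this, ← hrθ]
        refine (hGs _).trans ?_
        rw [mul_assoc, norm_sub_rev x y]
        gcongr
        exact hQr y x hy hx
    obtain ⟨x, hx, hfix, -⟩ := hcon.exists_fixedPoint' Metric.isClosed_closedBall.isComplete
      hmaps (x := 0) (by simpa using hr0) (edist_ne_top _ _)
    refine ⟨x, fun _ => ⟨by simpa using hx, ?_⟩⟩
    have h2 : G.symm (t • g - Q x) = x := hfix
    rw [LinearEquiv.symm_apply_eq] at h2
    rw [← h2]; abel
  choose x hx using hex
  have key : ∀ t ∈ Icc (0 : ℝ) 1, ∀ u ∈ Icc (0 : ℝ) 1,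
      s * ‖x t - x u‖ ≤ θ * ‖g‖ * |t - u| := by
    intro t ht u hu
    obtain ⟨h1, h2⟩ := hx t ht
    obtain ⟨h3, h4⟩ := hx u hu
    have h5 : G (x t - x u) = (t - u) • g - (Q (x t) - Q (x u)) := by
      rw [map_sub, eq_sub_of_add_eq h2, eq_sub_of_add_eq h4, sub_smul]; abel
    have h6 := hG (x t - x u)
    rw [h5] at h6
    have h7 : ‖(t - u) • g - (Q (x t) - Q (x u))‖ ≤ |t - u| * ‖g‖ + r * ‖x t - x u‖ := by
      refine (norm_sub_le _ _).trans (add_le_add ?_ (hQr _ _ h1 h3))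
      rw [norm_smul, Real.norm_eq_abs]
    have h8 := h6.trans (mul_le_mul_of_nonneg_left h7 hθ.le)
    have h9 : θ * (r * ‖x t - x u‖) = (1 - s) * ‖x t - x u‖ := by rw [← mul_assoc, hrθ]
    nlinarith
  refine ⟨x, ?_, ?_, hx⟩
  · refine LipschitzOnWith.continuousOn (K := Real.toNNReal (θ * ‖g‖ / s)) ?_
    refine LipschitzOnWith.of_dist_le_mul ?_
    intro t ht u hu
    rw [Real.coe_toNNReal _ (by positivity), dist_eq_norm, Real.dist_eq]
    have := key t ht u hu
    rw [div_mul_eq_mul_div, le_div_iff₀ hs0]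
    linarith
  · obtain ⟨h1, h2⟩ := hx 0 ⟨le_rfl, zero_le_one⟩
    have h3 := hG (x 0)
    have h4 : G (x 0) = - Q (x 0) := by
      rw [zero_smul] at h2
      exact eq_neg_of_add_eq_zero_left h2
    rw [h4, norm_neg] at h3
    have h5 := hQr (x 0) 0 h1 (by simpa using hr0)
    simp only [hQ0, sub_zero] at h5
    have h6 : θ * (r * ‖x 0‖) = (1 - s) * ‖x 0‖ := by rw [← mul_assoc, hrθ]
    have h7 : s * ‖x 0‖ ≤ 0 := by nlinarith
    have h8 : ‖x 0‖ ≤ 0 := by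
      by_contra h
      push Not at h
      have := mul_pos hs0 h
      linarith
    exact norm_le_zero_iff.1 h8

variable {n m : ℕ}

theorem det_ne_zero_of_lyap {X S : Matrix (Fin n) (Fin n) ℝ} {μ : ℝ} (hμ : 0 < μ)
    (hX : X.IsSymm) (h : X * S + S * X = (2 * μ) • (1 : Matrix (Fin n) (Fin n) ℝ)) :
    X.det ≠ 0 := by
  intro hdet
  obtain ⟨v, hv, hXv⟩ := Matrix.exists_mulVec_eq_zero_iff.2 hdet
  have hvX : v ᵥ* X = 0 := by rw [← hX.eq, vecMul_transpose, hXv]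
  have h1 : v ⬝ᵥ ((X * S + S * X) *ᵥ v) = 0 := by
    rw [add_mulVec, dotProduct_add, ← mulVec_mulVec, ← mulVec_mulVec, hXv,
      dotProduct_mulVec, hvX]
    simp
  rw [h] at h1
  simp only [smul_mulVec, one_mulVec, dotProduct_smul, smul_eq_mul] at h1
  have h2 : v ⬝ᵥ v = 0 := by
    rcases mul_eq_zero.1 h1 with h | h
    · linarith
    · exact h
  exact hv (dotProduct_self_eq_zero.1 h2)

theorem mul_eq_of_lyap {X S : Matrix (Fin n) (Fin n) ℝ} {μ : ℝ}
    (hX : X.PosDef) (hS : S.IsSymm)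
    (h : X * S + S * X = (2 * μ) • (1 : Matrix (Fin n) (Fin n) ℝ)) :
    S = μ • X⁻¹ := by
  have hdet : IsUnit X.det := hX.det_pos.ne'.isUnit
  have hXs : X.IsSymm := by have := hX.1; rwa [IsHermitian, conjTranspose_eq_transpose_of_trivial] at this
  set Z := S - μ • X⁻¹ with hZ
  have hZs : Zᵀ = Z := by
    rw [hZ, transpose_sub, transpose_smul, transpose_nonsing_inv, hXs.eq, hS.eq]
  have hZX : X * Z + Z * X = 0 := by
    have : X * Z + Z * X = (X * S + S * X) - (2 * μ) • (1 : Matrix (Fin n) (Fin n) ℝ) := by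
      rw [hZ, mul_sub, sub_mul, mul_smul_comm, smul_mul_assoc, mul_nonsing_inv _ hdet,
        nonsing_inv_mul _ hdet, two_mul, add_smul]
      abel
    rw [this, h, sub_self]
  have hps : (Zᴴ * X * Z).PosSemidef := hX.posSemidef.conjTranspose_mul_mul_same Z
  have hZh : Zᴴ = Z := by rw [conjTranspose_eq_transpose_of_trivial, hZs]
  rw [hZh] at hps
  have htr : (Z * X * Z).trace = 0 := by
    have h1 : (Z * (X * Z + Z * X)).trace = 0 := by rw [hZX]; simp
    rw [mul_add, trace_add, ← mul_assoc, trace_mul_comm Z (Z * X)] at h1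
    linarith
  have h0 := hps.trace_eq_zero_iff.1 htr
  have hZ0 : Z = 0 := by
    ext i j
    by_contra hne
    have hv : Z *ᵥ Pi.single j 1 ≠ 0 := by
      intro h
      apply hne
      have := congrFun h i
      simpa using this
    have h1 := hX.dotProduct_mulVec_pos hv
    have h2 : (Z *ᵥ Pi.single j 1) ⬝ᵥ (X *ᵥ (Z *ᵥ Pi.single j 1)) =
        (Pi.single j 1) ⬝ᵥ ((Z * X * Z) *ᵥ Pi.single j 1) := by
      rw [← mulVec_mulVec, ← mulVec_mulVec, dotProduct_mulVec (Pi.single j 1) Z, ← hZs,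
        vecMul_transpose, hZs]
    rw [star_trivial, h2, h0] at h1
    simp at h1
  exact sub_eq_zero.1 hZ0

theorem posDef_path {X : ℝ → Matrix (Fin n) (Fin n) ℝ} (hc : ContinuousOn X (Icc 0 1))
    (hs : ∀ t ∈ Icc (0 : ℝ) 1, (X t).IsSymm) (hd : ∀ t ∈ Icc (0 : ℝ) 1, (X t).det ≠ 0)
    (h0 : (X 0).PosDef) : (X 1).PosDef := by
  let Y : Icc (0 : ℝ) 1 → Matrix (Fin n) (Fin n) ℝ := fun t => X t
  have hY : Continuous Y := continuousOn_iff_continuous_restrict.1 hc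
  have hYs : ∀ t, (Y t).IsHermitian := fun t => by
    rw [IsHermitian, conjTranspose_eq_transpose_of_trivial]; exact hs t t.2
  have hq : Continuous fun p : Icc (0 : ℝ) 1 × (Fin n → ℝ) => p.2 ⬝ᵥ (Y p.1 *ᵥ p.2) :=
    Continuous.dotProduct continuous_snd
      (Continuous.matrix_mulVec (hY.comp continuous_fst) continuous_snd)
  have hcl : IsClopen {t | (Y t).PosDef} := by
    constructor
    · have : {t | (Y t).PosDef} = {t | ∀ v : Fin n → ℝ, 0 ≤ v ⬝ᵥ (Y t *ᵥ v)} := by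
        ext t
        simp only [mem_setOf_eq]
        constructor
        · intro h v
          simpa using h.posSemidef.dotProduct_mulVec_nonneg v
        · intro h
          have hps : (Y t).PosSemidef := .of_dotProduct_mulVec_nonneg (hYs t) (fun v => by simpa using h v)
          exact hps.posDef_iff_det_ne_zero.2 (hd t t.2)
      rw [this]
      simp only [setOf_forall]
      refine isClosed_iInter fun v => isClosed_le continuous_const ?_
      exact hq.comp (continuous_id.prodMk continuous_const)
    · rw [isOpen_iff_eventually]
      intro t ht
      have hev : ∀ᶠ u in nhds t, ∀ v ∈ Metric.sphere (0 : Fin n → ℝ) 1, 0 < v ⬝ᵥ (Y u *ᵥ v) := by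
        refine (isCompact_sphere (0 : Fin n → ℝ) 1).eventually_forall_of_forall_eventually ?_
        intro v hv
        have hv0 : v ≠ 0 := by
          rintro rfl
          simp at hv
        have := ht.dotProduct_mulVec_pos hv0
        exact (hq.tendsto (t, v)).eventually (lt_mem_nhds (by simpa using this))
      filter_upwards [hev] with u hu
      refine .of_dotProduct_mulVec_pos (hYs u) fun v hv => ?_
      have hnv : 0 < ‖v‖ := norm_pos_iff.2 hv
      have h1 := hu (‖v‖⁻¹ • v) (by simp [norm_smul, hnv.ne'])
      simp only [mulVec_smul, dotProduct_smul, smul_dotProduct, smul_eq_mul] at h1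
      rw [star_trivial]
      have h2 : 0 < ‖v‖⁻¹ := by positivity
      exact (mul_pos_iff_of_pos_left h2).1 ((mul_pos_iff_of_pos_left h2).1 h1)
  have hu := hcl.eq_univ ⟨⟨0, by simp⟩, h0⟩
  have : (⟨1, by simp⟩ : Icc (0 : ℝ) 1) ∈ {t | (Y t).PosDef} := by rw [hu]; trivial
  exact this

section norms

attribute [local instance] Matrix.frobeniusNormedAddCommGroup Matrix.frobeniusNormedSpace

theorem frob_eq (M : Matrix (Fin n) (Fin n) ℝ) : frobNorm M = ‖M‖ := by
  rw [Matrix.frobenius_norm_def, frobNorm, Real.sqrt_eq_rpow]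
  simp

theorem frob_mul (M N : Matrix (Fin n) (Fin n) ℝ) :
    frobNorm (M * N) ≤ frobNorm M * frobNorm N := by
  simp only [frob_eq]; exact Matrix.frobenius_norm_mul M N

theorem frob_add (M N : Matrix (Fin n) (Fin n) ℝ) :
    frobNorm (M + N) ≤ frobNorm M + frobNorm N := by
  simp only [frob_eq]; exact norm_add_le M N

theorem frob_smul (c : ℝ) (M : Matrix (Fin n) (Fin n) ℝ) :
    frobNorm (c • M) = |c| * frobNorm M := by
  simp only [frob_eq, norm_smul, Real.norm_eq_abs]

theorem frob_nonneg (M : Matrix (Fin n) (Fin n) ℝ) : 0 ≤ frobNorm M := by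
  rw [frob_eq]; exact norm_nonneg M

end norms

theorem theta_spec {A : Fin m → Matrix (Fin n) (Fin n) ℝ} {X S : Matrix (Fin n) (Fin n) ℝ} {θ : ℝ}
    (hθ : θ = thetaMu A X S) (hpos : θ ≠ 0) : 0 < θ ∧
    ∀ (DX DS : Matrix (Fin n) (Fin n) ℝ) (Dy : Fin m → ℝ),
    DX.IsSymm → DS.IsSymm →
    Real.sqrt (frobNorm DX ^ 2 + (∑ i, (Dy i) ^ 2) + frobNorm DS ^ 2) ≤
      θ * Real.sqrt ((∑ i, (((A i) * DX).trace) ^ 2) +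
        frobNorm ((∑ i, Dy i • A i) + DS) ^ 2 +
        frobNorm ((1 / 2 : ℝ) • (DX * S + S * DX + X * DS + DS * X)) ^ 2) := by
  rw [thetaMu] at hθ
  have hgen : ∀ T : Set ℝ, θ = sInf T → T.Nonempty := fun T hT => by
    rw [Set.nonempty_iff_ne_empty]
    rintro rfl
    rw [Real.sInf_empty] at hT
    exact hpos hT
  have hne := hgen _ hθ
  refine ⟨lt_of_le_of_ne ?_ hpos.symm, ?_⟩
  · rw [hθ]; exact Real.sInf_nonneg fun t ht => ht.1
  · intro DX DS Dy h1 h2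
    refine le_of_forall_pos_le_add fun e he => ?_
    set R := Real.sqrt ((∑ i, (((A i) * DX).trace) ^ 2) +
        frobNorm ((∑ i, Dy i • A i) + DS) ^ 2 +
        frobNorm ((1 / 2 : ℝ) • (DX * S + S * DX + X * DS + DS * X)) ^ 2) with hR
    have hR0 : 0 ≤ R := Real.sqrt_nonneg _
    obtain ⟨t, ht, hlt⟩ := exists_lt_of_csInf_lt hne
      (show _ < θ + e / (R + 1) by rw [← hθ]; have : 0 < e / (R + 1) := by positivity
                                   linarith)
    refine (ht.2 DX DS Dy h1 h2).trans ?_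
    rw [← hR]
    have h3 : t * R ≤ (θ + e / (R + 1)) * R := mul_le_mul_of_nonneg_right hlt.le hR0
    have h4 : e / (R + 1) * R ≤ e := by
      rw [div_mul_eq_mul_div, div_le_iff₀ (by positivity)]
      nlinarith
    nlinarith

/-- The ambient Euclidean space of triples. -/
abbrev K (n m : ℕ) := EuclideanSpace ℝ ((Fin n × Fin n) ⊕ (Fin m ⊕ (Fin n × Fin n)))

/-- First matrix component. -/
def pX (z : K n m) : Matrix (Fin n) (Fin n) ℝ := Matrix.of fun i j => z (Sum.inl (i, j))
/-- Vector component. -/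
def py (z : K n m) : Fin m → ℝ := fun i => z (Sum.inr (Sum.inl i))
/-- Second matrix component. -/
def pS (z : K n m) : Matrix (Fin n) (Fin n) ℝ := Matrix.of fun i j => z (Sum.inr (Sum.inr (i, j)))
/-- Assembling a triple. -/
def mk (X : Matrix (Fin n) (Fin n) ℝ) (y : Fin m → ℝ) (S : Matrix (Fin n) (Fin n) ℝ) : K n m :=
  WithLp.toLp 2 (Sum.elim (fun p => X p.1 p.2) (Sum.elim y (fun p => S p.1 p.2)))

@[simp] theorem pX_mk (X : Matrix (Fin n) (Fin n) ℝ) (y : Fin m → ℝ) (S) : pX (mk X y S) = X := rfl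
@[simp] theorem py_mk (X : Matrix (Fin n) (Fin n) ℝ) (y : Fin m → ℝ) (S) : py (mk X y S) = y := rfl
@[simp] theorem pS_mk (X : Matrix (Fin n) (Fin n) ℝ) (y : Fin m → ℝ) (S) : pS (mk X y S) = S := rfl
@[simp] theorem pX_add (z w : K n m) : pX (z + w) = pX z + pX w := rfl
@[simp] theorem py_add (z w : K n m) : py (z + w) = py z + py w := rfl
@[simp] theorem pS_add (z w : K n m) : pS (z + w) = pS z + pS w := rfl
@[simp] theorem pX_sub (z w : K n m) : pX (z - w) = pX z - pX w := rfl
@[simp] theorem py_sub (z w : K n m) : py (z - w) = py z - py w := rfl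
@[simp] theorem pS_sub (z w : K n m) : pS (z - w) = pS z - pS w := rfl
@[simp] theorem pX_smul (c : ℝ) (z : K n m) : pX (c • z) = c • pX z := rfl
@[simp] theorem py_smul (c : ℝ) (z : K n m) : py (c • z) = c • py z := rfl
@[simp] theorem pS_smul (c : ℝ) (z : K n m) : pS (c • z) = c • pS z := rfl
@[simp] theorem pX_zero : pX (0 : K n m) = 0 := rfl
@[simp] theorem py_zero : py (0 : K n m) = 0 := rfl
@[simp] theorem pS_zero : pS (0 : K n m) = 0 := rfl

theorem K_ext {z w : K n m} (h1 : pX z = pX w) (h2 : py z = py w) (h3 : pS z = pS w) : z = w := by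
  ext i
  rcases i with ⟨i, j⟩ | i | ⟨i, j⟩
  · exact congrFun (congrFun h1 i) j
  · exact congrFun h2 i
  · exact congrFun (congrFun h3 i) j

theorem frob_sq (M : Matrix (Fin n) (Fin n) ℝ) : frobNorm M ^ 2 = ∑ i, ∑ j, (M i j) ^ 2 :=
  Real.sq_sqrt (Finset.sum_nonneg fun _ _ => Finset.sum_nonneg fun _ _ => sq_nonneg _)

theorem K_norm (z : K n m) :
    ‖z‖ = Real.sqrt (frobNorm (pX z) ^ 2 + (∑ i, (py z i) ^ 2) + frobNorm (pS z) ^ 2) := by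
  rw [EuclideanSpace.norm_eq, frob_sq, frob_sq]
  congr 1
  simp only [Fintype.sum_sum_type, Fintype.sum_prod_type, Real.norm_eq_abs, sq_abs, add_assoc]
  rfl

theorem K_norm_sq (z : K n m) :
    ‖z‖ ^ 2 = frobNorm (pX z) ^ 2 + (∑ i, (py z i) ^ 2) + frobNorm (pS z) ^ 2 := by
  rw [K_norm, Real.sq_sqrt]
  have : 0 ≤ ∑ i, (py z i) ^ 2 := Finset.sum_nonneg fun _ _ => sq_nonneg _
  positivity

theorem frob_pX_le (z : K n m) : frobNorm (pX z) ≤ ‖z‖ := by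
  have h := K_norm_sq z
  have : 0 ≤ ∑ i, (py z i) ^ 2 := Finset.sum_nonneg fun _ _ => sq_nonneg _
  exact abs_le_of_sq_le_sq' (by nlinarith [sq_nonneg (frobNorm (pS z))]) (norm_nonneg _) |>.2

theorem frob_pS_le (z : K n m) : frobNorm (pS z) ≤ ‖z‖ := by
  have h := K_norm_sq z
  have : 0 ≤ ∑ i, (py z i) ^ 2 := Finset.sum_nonneg fun _ _ => sq_nonneg _
  exact abs_le_of_sq_le_sq' (by nlinarith [sq_nonneg (frobNorm (pX z))]) (norm_nonneg _) |>.2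

/-- The subspace of triples with symmetric matrices. -/
def V (n m : ℕ) : Submodule ℝ (K n m) where
  carrier := {z | (pX z).IsSymm ∧ (pS z).IsSymm}
  add_mem' := fun h1 h2 => ⟨h1.1.add h2.1, h1.2.add h2.2⟩
  zero_mem' := ⟨Matrix.isSymm_zero, Matrix.isSymm_zero⟩
  smul_mem' := fun c _ h => ⟨h.1.smul c, h.2.smul c⟩

theorem symm_anti {P R : Matrix (Fin n) (Fin n) ℝ} (hP : P.IsSymm) (hR : R.IsSymm) :
    (P * R + R * P).IsSymm := by
  rw [IsSymm, transpose_add, transpose_mul, transpose_mul, hP.eq, hR.eq, add_comm]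

theorem symm_sum {A : Fin m → Matrix (Fin n) (Fin n) ℝ} (hA : ∀ i, (A i).IsSymm) (y : Fin m → ℝ) :
    (∑ i, y i • A i).IsSymm := by
  rw [IsSymm, transpose_sum]
  exact Finset.sum_congr rfl fun i _ => by rw [transpose_smul, (hA i).eq]

/-- The Jacobian. -/
def L (A : Fin m → Matrix (Fin n) (Fin n) ℝ) (hA : ∀ i, (A i).IsSymm)
    {X S : Matrix (Fin n) (Fin n) ℝ} (hX : X.IsSymm) (hS : S.IsSymm) : V n m →ₗ[ℝ] V n m where
  toFun z := ⟨mk ((1 / 2 : ℝ) • (pX z.1 * S + S * pX z.1 + X * pS z.1 + pS z.1 * X))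
    (fun i => (A i * pX z.1).trace) ((∑ i, py z.1 i • A i) + pS z.1), by
      refine ⟨?_, ?_⟩
      · rw [pX_mk, add_assoc (_ + _)]
        exact ((symm_anti z.2.1 hS).add (symm_anti hX z.2.2)).smul _
      · rw [pS_mk]
        exact (symm_sum hA _).add z.2.2⟩
  map_add' z w := by
    apply Subtype.ext
    apply K_ext
    · simp only [Submodule.coe_add, pX_add, pS_add, pX_mk, ← smul_add]
      congr 1
      noncomm_ring
    · ext i
      simp [mul_add]
    · simp only [Submodule.coe_add, pS_add, py_add, pS_mk, Pi.add_apply, add_smul,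
        Finset.sum_add_distrib]
      abel
  map_smul' c z := by
    apply Subtype.ext
    apply K_ext
    · simp only [Submodule.coe_smul, pX_smul, pS_smul, pX_mk, RingHom.id_apply, smul_mul_assoc,
        mul_smul_comm, ← smul_add]
      rw [smul_comm]
    · ext i
      simp
    · simp [Finset.smul_sum, smul_smul]

/-- The quadratic remainder. -/
def Q (z : V n m) : V n m := ⟨mk ((1 / 2 : ℝ) • (pX z.1 * pS z.1 + pS z.1 * pX z.1)) 0 0,
  (symm_anti z.2.1 z.2.2).smul (1 / 2 : ℝ), Matrix.isSymm_zero⟩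

theorem norm_mk_X (X : Matrix (Fin n) (Fin n) ℝ) : ‖(mk X 0 0 : K n m)‖ = frobNorm X := by
  rw [K_norm]
  have h0 : frobNorm (0 : Matrix (Fin n) (Fin n) ℝ) = 0 := by simp [frobNorm]
  simp [h0, Real.sqrt_sq (frob_nonneg X)]

theorem norm_mk_S (X : Matrix (Fin n) (Fin n) ℝ) : ‖(mk 0 0 X : K n m)‖ = frobNorm X := by
  rw [K_norm]
  have h0 : frobNorm (0 : Matrix (Fin n) (Fin n) ℝ) = 0 := by simp [frobNorm]
  simp [h0, Real.sqrt_sq (frob_nonneg X)]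

theorem cs_aux {a b c d p q : ℝ} (hp : 0 ≤ p) (hq : 0 ≤ q) (h1 : a ^ 2 + b ^ 2 ≤ p ^ 2)
    (h2 : c ^ 2 + d ^ 2 ≤ q ^ 2) : a * d + b * c ≤ p * q := by
  refine abs_le_of_sq_le_sq' (?_ : _ ≤ (p * q) ^ 2) (by positivity) |>.2
  have : (a ^ 2 + b ^ 2) * (c ^ 2 + d ^ 2) ≤ p ^ 2 * q ^ 2 := by gcongr
  nlinarith [sq_nonneg (a * c - b * d)]

theorem Q_lip (z w : V n m) : ‖Q z - Q w‖ ≤ 1 / 2 * (‖z‖ + ‖w‖) * ‖z - w‖ := by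
  set u := z.1 + w.1 with hu
  set v := z.1 - w.1 with hv
  have h1 : (Q z - Q w : V n m).1 = mk ((1 / 4 : ℝ) • ((pX u * pS v + pS v * pX u) +
      (pX v * pS u + pS u * pX v))) 0 0 := by
    apply K_ext
    · simp only [Q, hu, hv, Submodule.coe_sub, pX_sub, pX_mk, pX_add, pS_add, pS_sub]
      have e : ∀ a b c d : Matrix (Fin n) (Fin n) ℝ,
        (1 / 2 : ℝ) • (a * b + b * a) - (1 / 2 : ℝ) • (c * d + d * c) = (1 / 4 : ℝ) •
         (((a + c) * (b - d) + (b - d) * (a + c)) + ((a - c) * (b + d) + (b + d) * (a - c))) := by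
        intro a b c d
        have : (1 / 2 : ℝ) = (1 / 4) * 2 := by norm_num
        rw [this, mul_smul, mul_smul, ← smul_sub]
        congr 1
        rw [two_smul, two_smul]
        noncomm_ring
      exact e _ _ _ _
    · ext i; simp [Q]
    · simp [Q]
  have h2 : ‖Q z - Q w‖ = ‖(Q z - Q w : V n m).1‖ := rfl
  have h3 : ‖z - w‖ = ‖v‖ := rfl
  have h4 : ‖u‖ ≤ ‖z‖ + ‖w‖ := norm_add_le z.1 w.1
  rw [h2, h1, h3, norm_mk_X, frob_smul, abs_of_pos (by norm_num)]
  have h5 := frob_add (pX u * pS v + pS v * pX u) (pX v * pS u + pS u * pX v)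
  have h6 := frob_add (pX u * pS v) (pS v * pX u)
  have h7 := frob_add (pX v * pS u) (pS u * pX v)
  have h8 := frob_mul (pX u) (pS v)
  have h9 := frob_mul (pS v) (pX u)
  have h10 := frob_mul (pX v) (pS u)
  have h11 := frob_mul (pS u) (pX v)
  have hy : ∀ x : K n m, frobNorm (pX x) ^ 2 + frobNorm (pS x) ^ 2 ≤ ‖x‖ ^ 2 := fun x => by
    rw [K_norm_sq]
    have : 0 ≤ ∑ i, (py x i) ^ 2 := Finset.sum_nonneg fun _ _ => sq_nonneg _
    linarith
  have h12 := cs_aux (norm_nonneg u) (norm_nonneg v) (hy u) (hy v)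
  have h13 : ‖u‖ * ‖v‖ ≤ (‖z‖ + ‖w‖) * ‖v‖ := mul_le_mul_of_nonneg_right h4 (norm_nonneg _)
  nlinarith

end Aux11

end

/-- Kantorovich-type bound on the perturbation of the central solution. -/
theorem stmt11 {n m : ℕ} (C Cbar : Matrix (Fin n) (Fin n) ℝ)
    (A : Fin m → Matrix (Fin n) (Fin n) ℝ) (b : Fin m → ℝ)
    (hSA : StandingAssumptions C Cbar A b) (hCbar0 : Cbar ≠ 0)
    (μ : ℝ) (hμ : 0 < μ)
    (Xμ Sμ : Matrix (Fin n) (Fin n) ℝ) (yμ : Fin m → ℝ)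
    (hcent : CentralSol C Cbar A b 0 μ Xμ yμ Sμ)
    (Xs Ss : Matrix (Fin n) (Fin n) ℝ) (ys : Fin m → ℝ)
    (hmc : MaxComp C Cbar A b 0 Xs ys Ss)
    (nB nT nN : ℕ)
    (hnB : nB = Module.finrank ℝ (LinearMap.range Xs.mulVecLin))
    (hnN : nN = Module.finrank ℝ (LinearMap.range Ss.mulVecLin))
    (hnT : nB + nT + nN = n)
    (φ ψ : Fin n → ℝ) (hφ : Antitone φ) (hψ : Antitone ψ)
    (QX QS : Matrix (Fin n) (Fin n) ℝ)
    (hQXorth : QXᵀ * QX = 1) (hQXd : Xμ * QX = QX * Matrix.diagonal φ)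
    (hQSorth : QSᵀ * QS = 1) (hQSd : Sμ * QS = QS * Matrix.diagonal ψ)
    (δ θ : ℝ)
    (hδ : δ = sInf ((fun i : Fin n => φ i) '' {i : Fin n | (i : ℕ) < nB + nT} ∪
      (fun i : Fin n => ψ i) '' {i : Fin n | (i : ℕ) < nN}))
    (hθ : θ = thetaMu A Xμ Sμ)
    (ε : ℝ)
    (hε : |ε| < min (δ / (2 * θ * frobNorm Cbar)) (1 / (2 * θ ^ 2 * frobNorm Cbar))) :
    ∃ (Xε Sε : Matrix (Fin n) (Fin n) ℝ) (yε : Fin m → ℝ),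
      CentralSol C Cbar A b ε μ Xε yε Sε ∧
      frobNorm (Xε - Xμ) ≤ (1 - Real.sqrt (1 - 2 * |ε| * θ ^ 2 * frobNorm Cbar)) / θ ∧
      frobNorm (Sε - Sμ) ≤ (1 - Real.sqrt (1 - 2 * |ε| * θ ^ 2 * frobNorm Cbar)) / θ := by
  obtain ⟨-, hCs, hA, -, -⟩ := hSA
  obtain ⟨⟨hXs, hXb, hXp⟩, ⟨hSs, hSd, hSp⟩, hXS⟩ := hcent
  have hθ0 : θ ≠ 0 := by
    rintro h
    rw [h] at hε
    simp only [mul_zero, zero_mul, div_zero, min_self] at hε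
    have := (lt_min_iff.1 hε).1
    exact absurd (abs_nonneg ε) (not_le.2 this)
  obtain ⟨hθp, hθb⟩ := Aux11.theta_spec hθ hθ0
  have hε2 := (lt_min_iff.1 hε).2
  have hc0 := Aux11.frob_nonneg Cbar
  have hcp : 0 < frobNorm Cbar := by
    refine lt_of_le_of_ne hc0 fun h => ?_
    rw [← h] at hε2
    simp only [mul_zero, div_zero] at hε2
    exact absurd (abs_nonneg ε) (not_le.2 hε2)
  rw [lt_div_iff₀ (by positivity)] at hε2
  have hbound : ∀ z : Aux11.V n m, ‖z‖ ≤ θ * ‖Aux11.L A hA hXs hSs z‖ := by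
    intro z
    have h1 : ‖z‖ = ‖z.1‖ := rfl
    have h2 : ‖Aux11.L A hA hXs hSs z‖ = ‖(Aux11.L A hA hXs hSs z).1‖ := rfl
    rw [h1, h2, Aux11.K_norm, Aux11.K_norm]
    refine (hθb _ _ _ z.2.1 z.2.2).trans (le_of_eq ?_)
    congr 2
    simp only [Aux11.L, LinearMap.coe_mk, AddHom.coe_mk, Aux11.pX_mk, Aux11.py_mk, Aux11.pS_mk]
    ring
  have hinj : Function.Injective (Aux11.L A hA hXs hSs) := by
    rw [injective_iff_map_eq_zero]
    intro z hz
    have := hbound z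
    rw [hz, norm_zero, mul_zero] at this
    exact norm_le_zero_iff.1 this
  let G := LinearEquiv.ofInjectiveEndo (Aux11.L A hA hXs hSs) hinj
  have hG : ∀ z, G z = Aux11.L A hA hXs hSs z := fun z => rfl
  let g : Aux11.V n m := ⟨Aux11.mk 0 0 (ε • Cbar), Matrix.isSymm_zero, hCs.smul ε⟩
  have hg : ‖g‖ = |ε| * frobNorm Cbar := by
    have : ‖g‖ = ‖(Aux11.mk 0 0 (ε • Cbar) : Aux11.K n m)‖ := rfl
    rw [this, Aux11.norm_mk_S, Aux11.frob_smul]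
  obtain ⟨x, hxc, hx0, hx⟩ := Aux11.kant G Aux11.Q θ hθp hbound
    (by apply Subtype.ext; apply Aux11.K_ext <;> simp [Aux11.Q]) Aux11.Q_lip g
    (by rw [hg]; linarith)
  have hr : (1 - Real.sqrt (1 - 2 * θ ^ 2 * ‖g‖)) / θ =
      (1 - Real.sqrt (1 - 2 * |ε| * θ ^ 2 * frobNorm Cbar)) / θ := by
    rw [hg]; congr 4; ring
  rw [hr] at hx
  have hdetXS : Xμ.det ≠ 0 := by
    intro h
    have h1 := congrArg Matrix.det hXS
    rw [det_mul, h, zero_mul, det_smul, det_one, mul_one] at h1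
    exact (pow_pos hμ _).ne h1
  have hXpd : Xμ.PosDef := hXp.posDef_iff_det_ne_zero.2 hdetXS
  have hSX : Sμ * Xμ = μ • (1 : Matrix (Fin n) (Fin n) ℝ) := by
    have h1 := congrArg Matrix.transpose hXS
    rw [transpose_mul, hXs.eq, hSs.eq, transpose_smul, transpose_one] at h1
    exact h1
  -- the equations along the path
  have heq : ∀ t ∈ Icc (0 : ℝ) 1,
      (Xμ + Aux11.pX (x t).1) * (Sμ + Aux11.pS (x t).1) +
        (Sμ + Aux11.pS (x t).1) * (Xμ + Aux11.pX (x t).1) =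
        (2 * μ) • (1 : Matrix (Fin n) (Fin n) ℝ) ∧
      (∀ i, (A i * Aux11.pX (x t).1).trace = 0) ∧
      (∑ i, Aux11.py (x t).1 i • A i) + Aux11.pS (x t).1 = t • ε • Cbar := by
    intro t ht
    have h := congrArg Subtype.val (hx t ht).2
    rw [hG] at h
    refine ⟨?_, ?_, ?_⟩
    · have h1 := congrArg Aux11.pX h
      simp only [Aux11.L, LinearMap.coe_mk, AddHom.coe_mk, Aux11.Q, g, Submodule.coe_add,
        Submodule.coe_smul, Aux11.pX_add, Aux11.pX_mk, Aux11.pX_smul, smul_zero, ← smul_add] at h1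
      have h2 := (smul_eq_zero.1 h1).resolve_left (by norm_num)
      rw [two_mul, add_smul]
      nth_rewrite 1 [← hXS]
      rw [← hSX, ← sub_eq_zero, ← h2]
      noncomm_ring
    · intro i
      have h1 := congrFun (congrArg Aux11.py h) i
      simpa [Aux11.L, Aux11.Q, g] using h1
    · have h1 := congrArg Aux11.pS h
      simpa [Aux11.L, Aux11.Q, g] using h1
  have hcont : ContinuousOn (fun t => Xμ + Aux11.pX (x t).1) (Icc 0 1) := by
    refine continuousOn_const.add ?_
    have hp : Continuous (fun z : Aux11.V n m => Aux11.pX z.1) := by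
      refine continuous_matrix fun i j => ?_
      exact (EuclideanSpace.proj (𝕜 := ℝ) (Sum.inl (i, j))).continuous.comp continuous_subtype_val
    exact hp.comp_continuousOn hxc
  have hsym : ∀ t, (Xμ + Aux11.pX (x t).1).IsSymm := fun t => hXs.add (x t).2.1
  have h1m : (1 : ℝ) ∈ Icc (0 : ℝ) 1 := by simp
  have hpd : (Xμ + Aux11.pX (x 1).1).PosDef :=
    Aux11.posDef_path hcont (fun t _ => hsym t)
      (fun t ht => Aux11.det_ne_zero_of_lyap hμ (hsym t) (heq t ht).1)
      (by simpa [hx0] using hXpd)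
  obtain ⟨e1, e2, e3⟩ := heq 1 h1m
  have hSsym : (Sμ + Aux11.pS (x 1).1).IsSymm := hSs.add (x 1).2.2
  have hSeq := Aux11.mul_eq_of_lyap hpd hSsym e1
  refine ⟨Xμ + Aux11.pX (x 1).1, Sμ + Aux11.pS (x 1).1, yμ + Aux11.py (x 1).1,
    ⟨⟨hsym 1, fun i => ?_, hpd.posSemidef⟩, ⟨hSsym, ?_, ?_⟩, ?_⟩, ?_, ?_⟩
  · rw [mul_add, trace_add, hXb, e2, add_zero]
  · simp only [Pi.add_apply, add_smul, Finset.sum_add_distrib]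
    rw [zero_smul, add_zero] at hSd
    rw [one_smul] at e3
    rw [← hSd, ← e3]
    abel
  · rw [hSeq]
    exact hpd.inv.posSemidef.smul hμ.le
  · rw [hSeq, mul_smul_comm, mul_nonsing_inv _ hpd.det_pos.ne'.isUnit]
  · rw [add_sub_cancel_left]
    exact (Aux11.frob_pX_le _).trans (hx 1 h1m).1
  · rw [add_sub_cancel_left]
    exact (Aux11.frob_pS_le _).trans (hx 1 h1m).1
end
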